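/- arXiv:1206.0489 — 2 statements merged into one kernel-verified Lean document; each statement's English description precedes it below -/
import Mathlib

section
/- Sum-difference inequality for mutual information: If X and Y are independent real-valued continuous random variables with all relevant differential entropies existing and finite, then for every α with 0 ≤ α ≤ 1, α·I(X+Y;X) + (1-α)·I(X+Y;Y) ≤ (1+α)·I(X-Y;X) + (2-α)·I(X-Y;Y), where I denotes mutual information. -/
open MeasureTheory ProbabilityTheory

/-- The differential entropy of a random variable `X` (with respect to a reference
measure `μ` on the value space, typically Lebesgue measure): if `f` is the density of
the law of `X` with respect to `μ`, then `h(X) = -E[log f(X)]`. -/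
noncomputable def dent {Ω E : Type*} [MeasurableSpace Ω] [MeasurableSpace E]
    (μ : Measure E) (P : Measure Ω) (X : Ω → E) : ℝ :=
  -∫ x, Real.log (((P.map X).rnDeriv μ x).toReal) ∂(P.map X)

/-- `X` is a continuous random variable (its law is absolutely continuous with respect
to the reference measure `μ`, i.e. it has a density `f`), and its differential entropy
exists and is finite (the log-density is integrable under the law of `X`). -/
def FiniteDent {Ω E : Type*} [MeasurableSpace Ω] [MeasurableSpace E]
    (μ : Measure E) (P : Measure Ω) (X : Ω → E) : Prop :=
  P.map X ≪ μ ∧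
    Integrable (fun x => Real.log (((P.map X).rnDeriv μ x).toReal)) (P.map X)

/-- The mutual information `I(X;Y) = h(X) + h(Y) - h(X,Y)` between two random
variables, with differential entropies taken with respect to the volume measures. -/
noncomputable def mutualInfo {Ω E F : Type*} [MeasurableSpace Ω] [MeasureSpace E] [MeasureSpace F]
    (P : Measure Ω) (X : Ω → E) (Y : Ω → F) : ℝ :=
  dent volume P X + dent volume P Y - dent volume P (fun ω => (X ω, Y ω))

/-!
All four joint entropies equal `h(X) + h(Y)`, so for every `α` the claim reduces to
`h(X + Y) + h(X) + h(Y) ≤ 3 h(X - Y)`. To prove this, let `(X₁, Y₁)` and `(X₂, Y₂)` be copies of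
`(X, Y)` that share their difference `D` and are conditionally independent given `D`, and let
`(X₃, Y₃)` be an independent copy. The three differences `D`, `X₃ - Y₂`, `X₁ - Y₃` are distributed
as `X - Y`, and the product of their densities divided by the densities of `X₁`, `Y₂`, `X₃ + Y₃`
has expectation at most `1`: after a translation of the variables, this expectation is bounded by
the total mass of a fourfold convolution of probability densities. Gibbs' inequality turns this
bound into the inequality of entropies.
-/

open scoped ENNReal

section Density

variable {Ω α β γ : Type*} [MeasurableSpace Ω] [MeasurableSpace α] [MeasurableSpace β]
  [MeasurableSpace γ] {μ : Measure α} {ν : Measure β} {ρ : Measure γ} {P : Measure Ω}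

lemma map_withDensity_of_leftInverse {T : α → β} {S : β → α} (hT : MeasurePreserving T μ ν)
    (hS : Measurable S) (hST : Function.LeftInverse S T) {p : α → ℝ≥0∞} (hp : Measurable p) :
    (μ.withDensity p).map T = ν.withDensity (p ∘ S) := by
  ext s hs
  rw [Measure.map_apply hT.measurable hs, withDensity_apply _ (hT.measurable hs),
    withDensity_apply _ hs, ← hT.setLIntegral_comp_preimage hs (hp.comp hS)]
  simp only [Function.comp_apply, hST _]

lemma fst_withDensity_prod [SFinite μ] [SFinite ν] {F : α × β → ℝ≥0∞} (hF : Measurable F) :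
    ((μ.prod ν).withDensity F).fst = μ.withDensity fun x => ∫⁻ y, F (x, y) ∂ν := by
  refine Measure.ext_of_lintegral _ fun φ hφ => ?_
  rw [Measure.fst, lintegral_map hφ measurable_fst,
    lintegral_withDensity_eq_lintegral_mul _ hF (by fun_prop),
    lintegral_withDensity_eq_lintegral_mul _ (by fun_prop) hφ, lintegral_prod _ (by fun_prop)]
  refine lintegral_congr fun x => ?_
  simp only [Pi.mul_apply]
  exact lintegral_mul_const _ (by fun_prop)

lemma ae_pdf_pos_and_lt_top [IsFiniteMeasure P] {Z : Ω → α} [HasPDF Z P μ] :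
    ∀ᵐ ω ∂P, 0 < pdf Z P μ (Z ω) ∧ pdf Z P μ (Z ω) < ∞ :=
  ae_of_ae_map (HasPDF.aemeasurable Z P μ) <|
    (Measure.rnDeriv_pos HasPDF.absolutelyContinuous).and
      (HasPDF.absolutelyContinuous.ae_le pdf.ae_lt_top)

lemma lintegral_div_pdf_le [IsFiniteMeasure P] {Z : Ω → α} [HasPDF Z P μ] {r : α → ℝ≥0∞}
    (hr : Measurable r) : ∫⁻ ω, r (Z ω) / pdf Z P μ (Z ω) ∂P ≤ ∫⁻ x, r x ∂μ :=
  calc ∫⁻ ω, r (Z ω) / pdf Z P μ (Z ω) ∂P = ∫⁻ x, pdf Z P μ x * (r x / pdf Z P μ x) ∂μ :=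
        (pdf.lintegral_pdf_mul (hr.div (measurable_pdf Z P μ)).aemeasurable).symm
    _ ≤ ∫⁻ x, r x ∂μ := lintegral_mono fun _ => ENNReal.mul_div_le

lemma lintegral_eq_pdf_fst [SFinite μ] [SFinite ν] [IsFiniteMeasure P] {U : Ω → α} {V : Ω → β}
    (hU : AEMeasurable U P) (hV : AEMeasurable V P) {F : α × β → ℝ≥0∞} (hF : Measurable F)
    (hUV : P.map (fun ω => (U ω, V ω)) = (μ.prod ν).withDensity F) :
    (fun u => ∫⁻ v, F (u, v) ∂ν) =ᵐ[μ] pdf U P μ := by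
  have hU_law : P.map U = μ.withDensity fun u => ∫⁻ v, F (u, v) ∂ν := by
    rw [← fst_withDensity_prod hF, ← hUV, Measure.fst_map_prodMk₀ hV]
  have := hasPDF_of_map_eq_withDensity hU _ (by fun_prop) hU_law
  exact ((pdf.eq_of_map_eq_withDensity _ (by fun_prop)).1 hU_law).symm

lemma map_comp_prodMk_of_indepFun [SFinite μ] [SFinite ν] [IsFiniteMeasure P]
    {X : Ω → α} {Y : Ω → β} [HasPDF X P μ] [HasPDF Y P ν] (hXY : IndepFun X Y P)
    {T : α × β → γ} {S : γ → α × β} (hT : MeasurePreserving T (μ.prod ν) ρ) (hS : Measurable S)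
    (hST : Function.LeftInverse S T) :
    P.map (fun ω => T (X ω, Y ω)) =
      ρ.withDensity fun z => pdf X P μ (S z).1 * pdf Y P ν (S z).2 := by
  have hX := HasPDF.aemeasurable X P μ
  have hY := HasPDF.aemeasurable Y P ν
  have h_joint : P.map (fun ω => (X ω, Y ω)) =
      (μ.prod ν).withDensity fun z => pdf X P μ z.1 * pdf Y P ν z.2 := by
    rw [hXY.map_prod_eq_prod_map_map hX hY, map_eq_withDensity_pdf X P μ,
      map_eq_withDensity_pdf Y P ν]
    exact prod_withDensity (measurable_pdf X P μ) (measurable_pdf Y P ν)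
  have h_map := AEMeasurable.map_map_of_aemeasurable hT.measurable.aemeasurable (hX.prodMk hY)
  rw [h_joint, map_withDensity_of_leftInverse hT hS hST (by fun_prop)] at h_map
  exact h_map.symm

end Density

section Entropy

variable {Ω Ω' α β γ : Type*} [MeasurableSpace Ω] [MeasurableSpace Ω'] [MeasurableSpace α]
  [MeasurableSpace β] [MeasurableSpace γ] {μ : Measure α} {ν : Measure β} {ρ : Measure γ}
  {P : Measure Ω} {P' : Measure Ω'}

lemma FiniteDent.hasPDF [SigmaFinite μ] [SFinite P] {Z : Ω → α} (h : FiniteDent μ P Z)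
    (hZ : AEMeasurable Z P) : HasPDF Z P μ :=
  ⟨hZ, inferInstance, h.1⟩

lemma FiniteDent.integrable_log_pdf {Z : Ω → α} (h : FiniteDent μ P Z) (hZ : AEMeasurable Z P) :
    Integrable (fun ω => Real.log (pdf Z P μ (Z ω)).toReal) P :=
  h.2.comp_aemeasurable hZ

lemma FiniteDent.of_identDistrib {Z : Ω → α} {Z' : Ω' → α} (h : FiniteDent μ P Z)
    (hZ : IdentDistrib Z' Z P' P) : FiniteDent μ P' Z' := by
  rwa [FiniteDent, hZ.map_eq]

lemma dent_eq_of_identDistrib {Z : Ω → α} {Z' : Ω' → α} (hZ : IdentDistrib Z' Z P' P) :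
    dent μ P' Z' = dent μ P Z := by
  rw [dent, hZ.map_eq, dent]

lemma dent_of_map_eq_withDensity [SigmaFinite μ] {Z : Ω → α} (hZ : AEMeasurable Z P)
    {p : α → ℝ≥0∞} (hp : Measurable p) (h : P.map Z = μ.withDensity p) :
    dent μ P Z = -∫ ω, Real.log (p (Z ω)).toReal ∂P := by
  have h_ae : (P.map Z).rnDeriv μ =ᵐ[P.map Z] p := by
    rw [h]
    exact (withDensity_absolutelyContinuous μ p).ae_le (Measure.rnDeriv_withDensity μ hp)
  rw [dent, integral_congr_ae (g := fun x => Real.log (p x).toReal)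
      (h_ae.mono fun x hx => by simp only [hx]),
    integral_map hZ hp.ennreal_toReal.log.aestronglyMeasurable]

lemma dent_eq_neg_integral_log_pdf [SigmaFinite μ] {Z : Ω → α} [HasPDF Z P μ] :
    dent μ P Z = -∫ ω, Real.log (pdf Z P μ (Z ω)).toReal ∂P :=
  dent_of_map_eq_withDensity (HasPDF.aemeasurable Z P μ) (measurable_pdf Z P μ)
    (map_eq_withDensity_pdf Z P μ)

lemma dent_comp_prodMk_of_indepFun [SigmaFinite μ] [SigmaFinite ν] [SigmaFinite ρ]
    [IsFiniteMeasure P] {X : Ω → α} {Y : Ω → β} (hX : AEMeasurable X P) (hY : AEMeasurable Y P)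
    (hXY : IndepFun X Y P) (hX_ent : FiniteDent μ P X) (hY_ent : FiniteDent ν P Y)
    {T : α × β → γ} {S : γ → α × β} (hT : MeasurePreserving T (μ.prod ν) ρ) (hS : Measurable S)
    (hST : Function.LeftInverse S T) :
    dent ρ P (fun ω => T (X ω, Y ω)) = dent μ P X + dent ν P Y := by
  have := hX_ent.hasPDF hX
  have := hY_ent.hasPDF hY
  have hTXY : AEMeasurable (fun ω => T (X ω, Y ω)) P :=
    hT.measurable.comp_aemeasurable (hX.prodMk hY)
  rw [dent_of_map_eq_withDensity hTXY (by fun_prop) (map_comp_prodMk_of_indepFun hXY hT hS hST),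
    dent_eq_neg_integral_log_pdf, dent_eq_neg_integral_log_pdf, ← neg_add,
    ← integral_add (hX_ent.integrable_log_pdf hX) (hY_ent.integrable_log_pdf hY)]
  congr 1
  refine integral_congr_ae ?_
  filter_upwards [ae_pdf_pos_and_lt_top (Z := X) (P := P) (μ := μ),
    ae_pdf_pos_and_lt_top (Z := Y) (P := P) (μ := ν)] with ω hω hω'
  simp only [hST _, ENNReal.toReal_mul]
  exact Real.log_mul (ENNReal.toReal_pos hω.1.ne' hω.2.ne).ne'
    (ENNReal.toReal_pos hω'.1.ne' hω'.2.ne).ne'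

end Entropy

section Gibbs

variable {Ω α : Type*} [MeasurableSpace Ω] [MeasurableSpace α] {μ : Measure α} {Q : Measure Ω}
  [IsProbabilityMeasure Q]

lemma integral_nonpos_of_lintegral_exp_le_one {l : Ω → ℝ} (hl : Integrable l Q)
    (h : ∫⁻ z, ENNReal.ofReal (Real.exp (l z)) ∂Q ≤ 1) : ∫ z, l z ∂Q ≤ 0 := by
  have h_meas : AEStronglyMeasurable (fun z => Real.exp (l z)) Q :=
    Real.continuous_exp.comp_aestronglyMeasurable hl.1
  have h_nonneg : 0 ≤ᵐ[Q] fun z => Real.exp (l z) := ae_of_all _ fun z => (Real.exp_pos _).le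
  have h_int : Integrable (fun z => Real.exp (l z)) Q :=
    (lintegral_ofReal_ne_top_iff_integrable h_meas h_nonneg).1 (h.trans_lt ENNReal.one_lt_top).ne
  have h_exp : ∫ z, Real.exp (l z) ∂Q ≤ 1 := by
    rw [integral_eq_lintegral_of_nonneg_ae h_nonneg h_meas]
    exact ENNReal.toReal_le_of_le_ofReal zero_le_one (by rwa [ENNReal.ofReal_one])
  calc ∫ z, l z ∂Q ≤ ∫ z, (Real.exp (l z) - 1) ∂Q :=
        integral_mono hl (h_int.sub (integrable_const 1)) fun z =>
          le_sub_iff_add_le.2 (Real.add_one_le_exp _)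
    _ = ∫ z, Real.exp (l z) ∂Q - 1 := by
        rw [integral_sub h_int (integrable_const 1), integral_const, probReal_univ, one_smul]
    _ ≤ 0 := sub_nonpos.2 h_exp

lemma ae_ofReal_exp_log_pdf {Z : Ω → α} [HasPDF Z Q μ] :
    ∀ᵐ ω ∂Q, ENNReal.ofReal (Real.exp (Real.log (pdf Z Q μ (Z ω)).toReal)) =
      pdf Z Q μ (Z ω) := by
  filter_upwards [ae_pdf_pos_and_lt_top (Z := Z) (P := Q) (μ := μ)] with ω hω
  rw [Real.exp_log (ENNReal.toReal_pos hω.1.ne' hω.2.ne), ENNReal.ofReal_toReal hω.2.ne]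

lemma sum_dent_le_sum_dent_of_lintegral_pdf_le_one [SigmaFinite μ] {ι κ : Type*} [Fintype ι]
    [Fintype κ] {U : ι → Ω → α} {V : κ → Ω → α} (hU : ∀ i, AEMeasurable (U i) Q)
    (hV : ∀ j, AEMeasurable (V j) Q) (hU_ent : ∀ i, FiniteDent μ Q (U i))
    (hV_ent : ∀ j, FiniteDent μ Q (V j))
    (h : ∫⁻ ω, (∏ i, pdf (U i) Q μ (U i ω)) * ∏ j, (pdf (V j) Q μ (V j ω))⁻¹ ∂Q ≤ 1) :
    ∑ j, dent μ Q (V j) ≤ ∑ i, dent μ Q (U i) := by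
  have hU_pdf i := (hU_ent i).hasPDF (hU i)
  have hV_pdf j := (hV_ent j).hasPDF (hV j)
  have hU_int i := (hU_ent i).integrable_log_pdf (hU i)
  have hV_int j := (hV_ent j).integrable_log_pdf (hV j)
  have hU_sum := integrable_finsetSum Finset.univ fun i _ => hU_int i
  have hV_sum := integrable_finsetSum Finset.univ fun j _ => hV_int j
  have h_gibbs := integral_nonpos_of_lintegral_exp_le_one (hU_sum.sub hV_sum) <| by
    refine le_of_eq_of_le (lintegral_congr_ae ?_) h
    filter_upwards [ae_all_iff.2 fun i => ae_ofReal_exp_log_pdf (Z := U i) (Q := Q) (μ := μ),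
      ae_all_iff.2 fun j => ae_ofReal_exp_log_pdf (Z := V j) (Q := Q) (μ := μ)] with ω hωU hωV
    rw [Pi.sub_apply, sub_eq_add_neg, ← Finset.sum_neg_distrib, Real.exp_add, Real.exp_sum,
      Real.exp_sum, ENNReal.ofReal_mul (by positivity),
      ENNReal.ofReal_prod_of_nonneg fun _ _ => (Real.exp_pos _).le,
      ENNReal.ofReal_prod_of_nonneg fun _ _ => (Real.exp_pos _).le]
    simp only [Real.exp_neg, ENNReal.ofReal_inv_of_pos (Real.exp_pos _), hωU, hωV]
  rw [integral_sub' hU_sum hV_sum, integral_finsetSum _ fun i _ => hU_int i,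
    integral_finsetSum _ fun j _ => hV_int j, sub_nonpos] at h_gibbs
  simp only [dent_eq_neg_integral_log_pdf, Finset.sum_neg_distrib]
  exact neg_le_neg h_gibbs

lemma sum_dent_le_sum_dent_of_identDistrib [SigmaFinite μ] {Ω' ι κ : Type*} [MeasurableSpace Ω']
    [Fintype ι] [Fintype κ] {P : Measure Ω'} {U : ι → Ω → α} {V : κ → Ω → α} {A : ι → Ω' → α}
    {B : κ → Ω' → α} (hU : ∀ i, IdentDistrib (U i) (A i) Q P)
    (hV : ∀ j, IdentDistrib (V j) (B j) Q P) (hA_ent : ∀ i, FiniteDent μ P (A i))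
    (hB_ent : ∀ j, FiniteDent μ P (B j))
    (h : ∫⁻ ω, (∏ i, pdf (A i) P μ (U i ω)) * ∏ j, (pdf (B j) P μ (V j ω))⁻¹ ∂Q ≤ 1) :
    ∑ j, dent μ P (B j) ≤ ∑ i, dent μ P (A i) := by
  simp only [← fun i => dent_eq_of_identDistrib (μ := μ) (hU i),
    ← fun j => dent_eq_of_identDistrib (μ := μ) (hV j)]
  refine sum_dent_le_sum_dent_of_lintegral_pdf_le_one (fun i => (hU i).aemeasurable_fst)
    (fun j => (hV j).aemeasurable_fst) (fun i => (hA_ent i).of_identDistrib (hU i))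
    (fun j => (hB_ent j).of_identDistrib (hV j)) ?_
  simpa only [pdf, (hU _).map_eq, (hV _).map_eq] using h

end Gibbs

section Product

variable {Ω Ω₁ Ω₂ E F : Type*} [MeasurableSpace Ω] [MeasurableSpace Ω₁] [MeasurableSpace Ω₂]
  [MeasurableSpace E] [MeasurableSpace F] {P : Measure Ω} {P₁ : Measure Ω₁} {P₂ : Measure Ω₂}

lemma identDistrib_comp_fst [SFinite P₁] [IsProbabilityMeasure P₂] {Z : Ω₁ → E}
    (hZ : AEMeasurable Z P₁) : IdentDistrib (fun z => Z z.1) Z (P₁.prod P₂) P₁ where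
  aemeasurable_fst := hZ.comp_fst
  aemeasurable_snd := hZ
  map_eq := by
    have h_fst : (P₁.prod P₂).map Prod.fst = P₁ := measurePreserving_fst.map_eq
    have := AEMeasurable.map_map_of_aemeasurable (h_fst.symm ▸ hZ) measurable_fst.aemeasurable
    rw [h_fst] at this
    exact this.symm

lemma identDistrib_comp_snd [IsProbabilityMeasure P₁] [SFinite P₂] {Z : Ω₂ → E}
    (hZ : AEMeasurable Z P₂) : IdentDistrib (fun z => Z z.2) Z (P₁.prod P₂) P₂ where
  aemeasurable_fst := hZ.comp_snd
  aemeasurable_snd := hZ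
  map_eq := by
    have h_snd : (P₁.prod P₂).map Prod.snd = P₂ := measurePreserving_snd.map_eq
    have := AEMeasurable.map_map_of_aemeasurable (h_snd.symm ▸ hZ) measurable_snd.aemeasurable
    rw [h_snd] at this
    exact this.symm

lemma identDistrib_prodMk_of_indepFun [IsProbabilityMeasure P₁] [IsProbabilityMeasure P₂]
    {U : Ω₁ → E} {V : Ω₂ → F} {X : Ω → E} {Y : Ω → F} (hU : IdentDistrib U X P₁ P)
    (hV : IdentDistrib V Y P₂ P) (hXY : IndepFun X Y P) :
    IdentDistrib (fun z => (U z.1, V z.2)) (fun ω => (X ω, Y ω)) (P₁.prod P₂) P :=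
  ((identDistrib_comp_fst hU.aemeasurable_fst).trans hU).prodMk
    ((identDistrib_comp_snd hV.aemeasurable_fst).trans hV)
    (indepFun_prod₀ hU.aemeasurable_fst hV.aemeasurable_fst) hXY

end Product

section Coupling

variable {α β : Type*} [MeasurableSpace α] [MeasurableSpace β] {μ : Measure α} {ν : Measure β}
  [SFinite ν] {F : α × β → ℝ≥0∞} {k : α → ℝ≥0∞}

/-- The law of a triple `(D, Y₁, Y₂)` such that `(D, Y₁)` and `(D, Y₂)` both have density `F` with
respect to `μ.prod ν`, and `Y₁`, `Y₂` are conditionally independent given `D`. The function `k` has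
to be a version of the density of `D`, that is, of the first marginal of `F`. -/
noncomputable def condIndepCoupling (μ : Measure α) (ν : Measure β) (F : α × β → ℝ≥0∞)
    (k : α → ℝ≥0∞) : Measure (α × β × β) :=
  (μ.prod (ν.prod ν)).withDensity fun z => F (z.1, z.2.1) * F (z.1, z.2.2) / k z.1

lemma lintegral_condIndepCoupling (hF : Measurable F) (hk : Measurable k)
    {φ : α × β × β → ℝ≥0∞} (hφ : Measurable φ) :
    ∫⁻ z, φ z ∂(condIndepCoupling μ ν F k) =
      ∫⁻ d, ∫⁻ y₁, ∫⁻ y₂, F (d, y₁) * F (d, y₂) / k d * φ (d, y₁, y₂) ∂ν ∂ν ∂μ := by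
  rw [condIndepCoupling, lintegral_withDensity_eq_lintegral_mul _ (by fun_prop) hφ,
    lintegral_prod _ (by fun_prop)]
  refine lintegral_congr fun d => ?_
  rw [lintegral_prod _ (by fun_prop)]
  rfl

lemma map_fst_condIndepCoupling [SFinite μ] (hF : Measurable F) (hk : Measurable k)
    (hFk : (fun d => ∫⁻ y, F (d, y) ∂ν) =ᵐ[μ] k) (hk_fin : ∀ᵐ d ∂μ, k d < ∞) :
    (condIndepCoupling μ ν F k).map (fun z => (z.1, z.2.1)) = (μ.prod ν).withDensity F := by
  refine Measure.ext_of_lintegral _ fun φ hφ => ?_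
  rw [lintegral_map hφ (by fun_prop), lintegral_condIndepCoupling hF hk (by fun_prop),
    lintegral_withDensity_eq_lintegral_mul _ hF hφ, lintegral_prod _ (by fun_prop)]
  refine lintegral_congr_ae ?_
  filter_upwards [hFk, hk_fin] with d hd hd_fin
  rcases eq_or_ne (k d) 0 with hd_zero | hd_zero
  · rw [hd_zero, lintegral_eq_zero_iff (by fun_prop)] at hd
    refine lintegral_congr_ae ?_
    filter_upwards [hd] with y hy
    simp only [Pi.zero_apply] at hy
    simp [hy]
  · refine lintegral_congr fun y₁ => ?_
    have h_factor : ∀ y₂, F (d, y₁) * F (d, y₂) / k d * φ (d, y₁) =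
        F (d, y₁) / k d * φ (d, y₁) * F (d, y₂) := fun y₂ => by
      simp only [div_eq_mul_inv]
      ring
    simp only [h_factor, Pi.mul_apply]
    rw [lintegral_const_mul _ (by fun_prop), hd, mul_right_comm,
      ENNReal.div_mul_cancel hd_zero hd_fin.ne]

lemma map_swap_condIndepCoupling (hF : Measurable F) (hk : Measurable k) :
    (condIndepCoupling μ ν F k).map (Prod.map id Prod.swap) = condIndepCoupling μ ν F k := by
  refine Measure.ext_of_lintegral _ fun φ hφ => ?_
  rw [lintegral_map hφ (by fun_prop), lintegral_condIndepCoupling hF hk (by fun_prop),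
    lintegral_condIndepCoupling hF hk hφ]
  refine lintegral_congr fun d => ?_
  rw [lintegral_lintegral_swap (by fun_prop)]
  simp only [Prod.map_apply, id_eq, Prod.swap_prod_mk, mul_comm (F (d, _)) (F (d, _))]

lemma map_snd_condIndepCoupling [SFinite μ] (hF : Measurable F) (hk : Measurable k)
    (hFk : (fun d => ∫⁻ y, F (d, y) ∂ν) =ᵐ[μ] k) (hk_fin : ∀ᵐ d ∂μ, k d < ∞) :
    (condIndepCoupling μ ν F k).map (fun z => (z.1, z.2.2)) = (μ.prod ν).withDensity F := by
  rw [← map_fst_condIndepCoupling hF hk hFk hk_fin, ← map_swap_condIndepCoupling hF hk,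
    Measure.map_map (by fun_prop) (by fun_prop), map_swap_condIndepCoupling hF hk]
  rfl

lemma identDistrib_condIndepCoupling [SFinite μ] {Ω : Type*} [MeasurableSpace Ω] {P : Measure Ω}
    [IsFiniteMeasure P] {U : Ω → α} {V : Ω → β} (hU : AEMeasurable U P) (hV : AEMeasurable V P)
    (hF : Measurable F) (hUV : P.map (fun ω => (U ω, V ω)) = (μ.prod ν).withDensity F) :
    IdentDistrib (fun z => (z.1, z.2.1)) (fun ω => (U ω, V ω))
        (condIndepCoupling μ ν F (pdf U P μ)) P ∧
      IdentDistrib (fun z => (z.1, z.2.2)) (fun ω => (U ω, V ω))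
        (condIndepCoupling μ ν F (pdf U P μ)) P := by
  have h_marginal := lintegral_eq_pdf_fst hU hV hF hUV
  have hU_pdf : Measurable (pdf U P μ) := measurable_pdf U P μ
  exact ⟨⟨by fun_prop, hU.prodMk hV,
      (map_fst_condIndepCoupling hF hU_pdf h_marginal pdf.ae_lt_top).trans hUV.symm⟩,
    ⟨by fun_prop, hU.prodMk hV,
      (map_snd_condIndepCoupling hF hU_pdf h_marginal pdf.ae_lt_top).trans hUV.symm⟩⟩

end Coupling

section Convolution

variable {G : Type*} [AddCommGroup G] [MeasurableSpace G] [MeasurableAdd₂ G] [MeasurableNeg G]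
  {μ : Measure G} [μ.IsAddLeftInvariant] {f g k : G → ℝ≥0∞}

lemma lintegral_add_mul_sub_eq_lconvolution [μ.IsNegInvariant] (f k : G → ℝ≥0∞) (d x : G) :
    ∫⁻ y, f (d + y) * k (x - y) ∂μ = (k ⋆ₗ[μ] f) (d + x) := by
  rw [lconvolution_def, ← lintegral_sub_left_eq_self _ x]
  refine lintegral_congr fun y => ?_
  rw [sub_sub_cancel, mul_comm, neg_add_eq_sub, add_sub_assoc]

lemma lintegral_lconvolution [SigmaFinite μ] (hf : Measurable f) (hg : Measurable g) :
    ∫⁻ x, (f ⋆ₗ[μ] g) x ∂μ = (∫⁻ x, f x ∂μ) * ∫⁻ x, g x ∂μ := by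
  simp only [lconvolution_def]
  rw [lintegral_lintegral_swap (by fun_prop)]
  have h_inner : ∀ y, ∫⁻ x, f y * g (-y + x) ∂μ = f y * ∫⁻ x, g x ∂μ := fun y => by
    rw [lintegral_const_mul _ (by fun_prop), lintegral_add_left_eq_self g]
  simp only [h_inner]
  rw [lintegral_mul_const _ hf]

lemma lintegral_translates_eq_lconvolution [SigmaFinite μ] [μ.IsNegInvariant]
    (hf : Measurable f) (hg : Measurable g) (hk : Measurable k) (x w : G) :
    ∫⁻ d, ∫⁻ y₁, ∫⁻ y₂, g y₁ * f (d + y₂) * (k (x - y₂) * k (d + y₁ - w)) ∂μ ∂μ ∂μ =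
      (((fun z => k (-z)) ⋆ₗ[μ] g) ⋆ₗ[μ] (k ⋆ₗ[μ] f)) (x + w) := by
  calc ∫⁻ d, ∫⁻ y₁, ∫⁻ y₂, g y₁ * f (d + y₂) * (k (x - y₂) * k (d + y₁ - w)) ∂μ ∂μ ∂μ
      = ∫⁻ d, ∫⁻ y₁, ∫⁻ y₂, g y₁ * k (d + y₁ - w) * (f (d + y₂) * k (x - y₂)) ∂μ ∂μ ∂μ := by
        refine lintegral_congr fun d => lintegral_congr fun y₁ => lintegral_congr fun y₂ => ?_
        ring
    _ = ∫⁻ d, (∫⁻ y₁, g y₁ * k (d + y₁ - w) ∂μ) * (k ⋆ₗ[μ] f) (d + x) ∂μ := by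
        refine lintegral_congr fun d => ?_
        rw [← lintegral_mul_const _ (by fun_prop)]
        refine lintegral_congr fun y₁ => ?_
        rw [lintegral_const_mul _ (by fun_prop), lintegral_add_mul_sub_eq_lconvolution]
    _ = ∫⁻ d, (k ⋆ₗ[μ] f) (x + d) * ((fun z => k (-z)) ⋆ₗ[μ] g) (w - d) ∂μ := by
        refine lintegral_congr fun d => ?_
        have := lintegral_add_mul_sub_eq_lconvolution (μ := μ) g (fun z => k (-z)) 0 (w - d)
        rw [zero_add] at this
        rw [← this, mul_comm, add_comm x]
        congr 1
        refine lintegral_congr fun y₁ => ?_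
        rw [zero_add, show -(w - d - y₁) = d + y₁ - w by abel]
    _ = _ := lintegral_add_mul_sub_eq_lconvolution _ _ x w

lemma lintegral_lconvolution_lconvolution_neg [SigmaFinite μ] [μ.IsNegInvariant]
    (hf : Measurable f) (hg : Measurable g) (hk : Measurable k) :
    ∫⁻ t, (((fun z => k (-z)) ⋆ₗ[μ] g) ⋆ₗ[μ] (k ⋆ₗ[μ] f)) t ∂μ =
      (∫⁻ x, k x ∂μ) * (∫⁻ x, g x ∂μ) * ((∫⁻ x, k x ∂μ) * ∫⁻ x, f x ∂μ) := by
  rw [lintegral_lconvolution (by fun_prop) (by fun_prop), lintegral_lconvolution (by fun_prop) hg,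
    lintegral_lconvolution hk hf, lintegral_neg_eq_self]

end Convolution

section SumDifference

variable {Ω G : Type*} [MeasurableSpace Ω] [AddCommGroup G] [MeasurableSpace G] [MeasurableAdd₂ G]
  [MeasurableNeg G] {P : Measure Ω} {μ : Measure G} [SigmaFinite μ] [μ.IsAddLeftInvariant]
  {f g k : G → ℝ≥0∞} {X Y : Ω → G}

lemma lintegral_condIndepCoupling_le_lconvolution [μ.IsNegInvariant] (hf : Measurable f)
    (hg : Measurable g) (hk : Measurable k) (x w : G) :
    ∫⁻ z, k z.1 * k (x - z.2.2) * k (z.1 + z.2.1 - w) * ((f (z.1 + z.2.1))⁻¹ * (g z.2.2)⁻¹)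
        ∂(condIndepCoupling μ μ (fun z => f (z.1 + z.2) * g z.2) k) ≤
      (((fun z => k (-z)) ⋆ₗ[μ] g) ⋆ₗ[μ] (k ⋆ₗ[μ] f)) (x + w) := by
  rw [lintegral_condIndepCoupling (by fun_prop) hk (by fun_prop),
    ← lintegral_translates_eq_lconvolution hf hg hk]
  refine lintegral_mono fun d => lintegral_mono fun y₁ => lintegral_mono fun y₂ => ?_
  calc f (d + y₁) * g y₁ * (f (d + y₂) * g y₂) / k d *
        (k d * k (x - y₂) * k (d + y₁ - w) * ((f (d + y₁))⁻¹ * (g y₂)⁻¹))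
      = g y₁ * f (d + y₂) * (k (x - y₂) * k (d + y₁ - w)) *
          (f (d + y₁) / f (d + y₁) * (g y₂ / g y₂) * (k d / k d)) := by
        simp only [div_eq_mul_inv]
        ring
    _ ≤ g y₁ * f (d + y₂) * (k (x - y₂) * k (d + y₁ - w)) :=
        mul_le_of_le_one_right' <| mul_le_one' (mul_le_one' ENNReal.div_self_le_one
          ENNReal.div_self_le_one) ENNReal.div_self_le_one

lemma lintegral_prod_condIndepCoupling_le [μ.IsNegInvariant] [IsFiniteMeasure P]
    (hf : Measurable f) (hg : Measurable g) (hk : Measurable k) (hX : AEMeasurable X P)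
    (hY : AEMeasurable Y P) [HasPDF (X + Y) P μ] :
    ∫⁻ z, k z.1.1 * k (X z.2 - z.1.2.2) * k (z.1.1 + z.1.2.1 - Y z.2) *
        ((f (z.1.1 + z.1.2.1))⁻¹ * (g z.1.2.2)⁻¹ * (pdf (X + Y) P μ (X z.2 + Y z.2))⁻¹)
        ∂((condIndepCoupling μ μ (fun z => f (z.1 + z.2) * g z.2) k).prod P) ≤
      (∫⁻ x, k x ∂μ) * (∫⁻ x, g x ∂μ) * ((∫⁻ x, k x ∂μ) * ∫⁻ x, f x ∂μ) := by
  have : SFinite (condIndepCoupling μ μ (fun z => f (z.1 + z.2) * g z.2) k) := by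
    unfold condIndepCoupling
    infer_instance
  have := hX.comp_snd (μ := condIndepCoupling μ μ (fun z => f (z.1 + z.2) * g z.2) k)
  have := hY.comp_snd (μ := condIndepCoupling μ μ (fun z => f (z.1 + z.2) * g z.2) k)
  have : Measurable (pdf (X + Y) P μ) := measurable_pdf _ _ _
  rw [lintegral_prod_symm _ (by fun_prop)]
  refine le_trans (lintegral_mono fun ω => ?_) <|
    (lintegral_div_pdf_le (Z := X + Y) (P := P) (μ := μ)
      (r := ((fun z => k (-z)) ⋆ₗ[μ] g) ⋆ₗ[μ] (k ⋆ₗ[μ] f)) (by fun_prop)).trans_eq <|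
        lintegral_lconvolution_lconvolution_neg hf hg hk
  simp only [← mul_assoc _ _ (pdf (X + Y) P μ (X ω + Y ω))⁻¹]
  rw [lintegral_mul_const _ (by fun_prop), div_eq_mul_inv]
  exact mul_le_mul_left (lintegral_condIndepCoupling_le_lconvolution hf hg hk _ _) _

/-- The law of `(D, Y₁, Y₂)` such that `(D, Y₁)` and `(D, Y₂)` are copies of `(X - Y, Y)` for
independent `X` and `Y`, and `Y₁`, `Y₂` are conditionally independent given `D`. The joint density
of `(X - Y, Y)` at `(d, y)` is written as the density of `X` at `d + y` times that of `Y` at `y`. -/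
noncomputable def diffCoupling (μ : Measure G) (P : Measure Ω) (X Y : Ω → G) :
    Measure (G × G × G) :=
  condIndepCoupling μ μ (fun z => pdf X P μ (z.1 + z.2) * pdf Y P μ z.2) (pdf (X - Y) P μ)

lemma identDistrib_diffCoupling [IsFiniteMeasure P] [HasPDF X P μ] [HasPDF Y P μ]
    (hXY : IndepFun X Y P) :
    IdentDistrib (fun z => (z.1, z.2.1)) (fun ω => ((X - Y) ω, Y ω)) (diffCoupling μ P X Y) P ∧
      IdentDistrib (fun z => (z.1, z.2.2)) (fun ω => ((X - Y) ω, Y ω))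
        (diffCoupling μ P X Y) P := by
  have hX := HasPDF.aemeasurable X P μ
  have hY := HasPDF.aemeasurable Y P μ
  have : Measurable (pdf X P μ) := measurable_pdf X P μ
  have : Measurable (pdf Y P μ) := measurable_pdf Y P μ
  have h_law : P.map (fun ω => ((X - Y) ω, Y ω)) =
      (μ.prod μ).withDensity fun z => pdf X P μ (z.1 + z.2) * pdf Y P μ z.2 :=
    map_comp_prodMk_of_indepFun (T := fun z => (z.1 - z.2, z.2)) (S := fun z => (z.1 + z.2, z.2))
      hXY (measurePreserving_sub_prod μ μ) (by fun_prop) fun z => by simp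
  exact identDistrib_condIndepCoupling (hX.sub hY) hY (by fun_prop) h_law

lemma identDistrib_add_diffCoupling [IsFiniteMeasure P] [HasPDF X P μ] [HasPDF Y P μ]
    (hXY : IndepFun X Y P) : IdentDistrib (fun z => z.1 + z.2.1) X (diffCoupling μ P X Y) P := by
  have h := (identDistrib_diffCoupling (μ := μ) hXY).1.comp (measurable_fst.add measurable_snd)
  convert! h using 1
  ext ω
  simp

lemma identDistrib_snd_diffCoupling [IsFiniteMeasure P] [HasPDF X P μ] [HasPDF Y P μ]
    (hXY : IndepFun X Y P) : IdentDistrib (fun z => z.2.2) Y (diffCoupling μ P X Y) P :=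
  (identDistrib_diffCoupling hXY).2.comp measurable_snd

lemma isProbabilityMeasure_diffCoupling [IsProbabilityMeasure P] [HasPDF X P μ] [HasPDF Y P μ]
    (hXY : IndepFun X Y P) : IsProbabilityMeasure (diffCoupling μ P X Y) := by
  have h_law := (identDistrib_diffCoupling (μ := μ) hXY).1
  have : IsProbabilityMeasure ((diffCoupling μ P X Y).map fun z => (z.1, z.2.1)) := by
    rw [h_law.map_eq]
    exact Measure.isProbabilityMeasure_map h_law.aemeasurable_snd
  exact Measure.isProbabilityMeasure_of_map fun z => (z.1, z.2.1)

lemma identDistrib_sub_diffCoupling_prod [IsProbabilityMeasure P] [HasPDF X P μ] [HasPDF Y P μ]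
    (hXY : IndepFun X Y P) (i : Fin 3) :
    IdentDistrib
      ((![fun z => z.1.1, fun z => X z.2 - z.1.2.2, fun z => z.1.1 + z.1.2.1 - Y z.2] :
        Fin 3 → (G × G × G) × Ω → G) i) (X - Y) ((diffCoupling μ P X Y).prod P) P := by
  have hX := HasPDF.aemeasurable X P μ
  have hY := HasPDF.aemeasurable Y P μ
  have := isProbabilityMeasure_diffCoupling (μ := μ) hXY
  have h_left := identDistrib_add_diffCoupling (μ := μ) hXY
  have h_right := identDistrib_snd_diffCoupling (μ := μ) hXY
  have h_diff : IdentDistrib (fun z => z.1) (X - Y) (diffCoupling μ P X Y) P :=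
    (identDistrib_diffCoupling hXY).1.comp measurable_fst
  fin_cases i
  · exact (identDistrib_comp_fst h_diff.aemeasurable_fst).trans h_diff
  · exact (identDistrib_prodMk_of_indepFun h_right (.refl hX) hXY.symm).comp
      (u := fun z => z.2 - z.1) (by fun_prop)
  · exact (identDistrib_prodMk_of_indepFun h_left (.refl hY) hXY).comp
      (u := fun z => z.1 - z.2) (by fun_prop)

lemma identDistrib_add_diffCoupling_prod [IsProbabilityMeasure P] [HasPDF X P μ] [HasPDF Y P μ]
    (hXY : IndepFun X Y P) (j : Fin 3) :
    IdentDistrib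
      ((![fun z => z.1.1 + z.1.2.1, fun z => z.1.2.2, fun z => X z.2 + Y z.2] :
        Fin 3 → (G × G × G) × Ω → G) j) ((![X, Y, X + Y] : Fin 3 → Ω → G) j)
        ((diffCoupling μ P X Y).prod P) P := by
  have hX := HasPDF.aemeasurable X P μ
  have hY := HasPDF.aemeasurable Y P μ
  have := isProbabilityMeasure_diffCoupling (μ := μ) hXY
  have h_left := identDistrib_add_diffCoupling (μ := μ) hXY
  have h_right := identDistrib_snd_diffCoupling (μ := μ) hXY
  fin_cases j
  · exact (identDistrib_comp_fst h_left.aemeasurable_fst).trans h_left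
  · exact (identDistrib_comp_fst h_right.aemeasurable_fst).trans h_right
  · exact identDistrib_comp_snd (hX.add hY)

theorem dent_add_add_dent_add_dent_le_three_mul_dent_sub [μ.IsNegInvariant]
    [IsProbabilityMeasure P] (hX : AEMeasurable X P) (hY : AEMeasurable Y P)
    (hXY : IndepFun X Y P) (hX_ent : FiniteDent μ P X) (hY_ent : FiniteDent μ P Y)
    (h_add_ent : FiniteDent μ P (X + Y)) (h_sub_ent : FiniteDent μ P (X - Y)) :
    dent μ P (X + Y) + dent μ P X + dent μ P Y ≤ 3 * dent μ P (X - Y) := by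
  have := hX_ent.hasPDF hX
  have := hY_ent.hasPDF hY
  have := h_add_ent.hasPDF (hX.add hY)
  have := h_sub_ent.hasPDF (hX.sub hY)
  have := isProbabilityMeasure_diffCoupling (μ := μ) hXY
  have h_coupling : ∑ j, dent μ P ((![X, Y, X + Y] : Fin 3 → Ω → G) j) ≤
      ∑ _i : Fin 3, dent μ P (X - Y) := by
    refine sum_dent_le_sum_dent_of_identDistrib (Q := (diffCoupling μ P X Y).prod P)
      (identDistrib_sub_diffCoupling_prod hXY) (identDistrib_add_diffCoupling_prod hXY)
      (fun _ => h_sub_ent)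
      (Fin.forall_fin_succ.2 ⟨hX_ent, Fin.forall_fin_two.2 ⟨hY_ent, h_add_ent⟩⟩) ?_
    simp only [Fin.prod_univ_three]
    refine (lintegral_prod_condIndepCoupling_le (measurable_pdf X P μ) (measurable_pdf Y P μ)
      (measurable_pdf (X - Y) P μ) hX hY).trans_eq ?_
    simp only [pdf.lintegral_eq_measure_univ, measure_univ, mul_one]
  simp only [Fin.sum_univ_three] at h_coupling
  change dent μ P X + dent μ P Y + dent μ P (X + Y) ≤ _ at h_coupling
  linarith

end SumDifference

section MutualInfo

variable {Ω G : Type*} [MeasurableSpace Ω] [AddCommGroup G] [MeasureSpace G] [MeasurableAdd₂ G]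
  [MeasurableNeg G] {P : Measure Ω} [IsFiniteMeasure P] [SigmaFinite (volume : Measure G)]
  [(volume : Measure G).IsAddLeftInvariant] {X Y : Ω → G}

lemma mutualInfo_add_right (hX : AEMeasurable X P) (hY : AEMeasurable Y P)
    (hXY : IndepFun X Y P) (hX_ent : FiniteDent volume P X) (hY_ent : FiniteDent volume P Y) :
    mutualInfo P (X + Y) Y = dent volume P (X + Y) - dent volume P X := by
  have h_joint : dent volume P (fun ω => ((X + Y) ω, Y ω)) = dent volume P X + dent volume P Y :=
    dent_comp_prodMk_of_indepFun (T := fun z => (z.1 + z.2, z.2)) (S := fun z => (z.1 - z.2, z.2))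
      hX hY hXY hX_ent hY_ent (measurePreserving_add_prod _ _) (by fun_prop) fun z => by simp
  rw [mutualInfo, h_joint]
  ring

lemma mutualInfo_add_left (hX : AEMeasurable X P) (hY : AEMeasurable Y P)
    (hXY : IndepFun X Y P) (hX_ent : FiniteDent volume P X) (hY_ent : FiniteDent volume P Y) :
    mutualInfo P (X + Y) X = dent volume P (X + Y) - dent volume P Y := by
  rw [add_comm X Y, mutualInfo_add_right hY hX hXY.symm hY_ent hX_ent]

lemma mutualInfo_sub_right (hX : AEMeasurable X P) (hY : AEMeasurable Y P)
    (hXY : IndepFun X Y P) (hX_ent : FiniteDent volume P X) (hY_ent : FiniteDent volume P Y) :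
    mutualInfo P (X - Y) Y = dent volume P (X - Y) - dent volume P X := by
  have h_joint : dent volume P (fun ω => ((X - Y) ω, Y ω)) = dent volume P X + dent volume P Y :=
    dent_comp_prodMk_of_indepFun (T := fun z => (z.1 - z.2, z.2)) (S := fun z => (z.1 + z.2, z.2))
      hX hY hXY hX_ent hY_ent (measurePreserving_sub_prod _ _) (by fun_prop) fun z => by simp
  rw [mutualInfo, h_joint]
  ring

lemma mutualInfo_sub_left [(volume : Measure G).IsNegInvariant]
    (hX : AEMeasurable X P) (hY : AEMeasurable Y P) (hXY : IndepFun X Y P)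
    (hX_ent : FiniteDent volume P X) (hY_ent : FiniteDent volume P Y) :
    mutualInfo P (X - Y) X = dent volume P (X - Y) - dent volume P Y := by
  have h_shear : MeasurePreserving (fun z : G × G => (z.1 - z.2, z.1)) :=
    Measure.measurePreserving_swap.comp <|
      (MeasurePreserving.id volume).skew_product (g := fun x y => x - y) (by fun_prop) <|
        ae_of_all _ fun x => (Measure.measurePreserving_sub_left volume x).map_eq
  have h_joint : dent volume P (fun ω => ((X - Y) ω, X ω)) = dent volume P X + dent volume P Y :=
    dent_comp_prodMk_of_indepFun (T := fun z => (z.1 - z.2, z.1)) (S := fun z => (z.2, z.2 - z.1))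
      hX hY hXY hX_ent hY_ent h_shear (by fun_prop) fun z => by simp
  rw [mutualInfo, h_joint]
  ring

end MutualInfo

theorem sum_difference_mutualInfo_general {Ω G : Type*} [MeasurableSpace Ω] (P : Measure Ω)
    [IsProbabilityMeasure P] [AddCommGroup G] [MeasureSpace G] [MeasurableAdd₂ G]
    [MeasurableNeg G] [SigmaFinite (volume : Measure G)]
    [(volume : Measure G).IsAddLeftInvariant] [(volume : Measure G).IsNegInvariant]
    (X Y : Ω → G) (hX : AEMeasurable X P) (hY : AEMeasurable Y P) (hindep : IndepFun X Y P)
    (h1 : FiniteDent volume P X) (h2 : FiniteDent volume P Y)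
    (h3 : FiniteDent volume P (X + Y)) (h4 : FiniteDent volume P (X - Y)) (α : ℝ) :
    α * mutualInfo P (X + Y) X + (1 - α) * mutualInfo P (X + Y) Y ≤
      (1 + α) * mutualInfo P (X - Y) X + (2 - α) * mutualInfo P (X - Y) Y := by
  have h_dent := dent_add_add_dent_add_dent_le_three_mul_dent_sub hX hY hindep h1 h2 h3 h4
  rw [mutualInfo_add_left hX hY hindep h1 h2, mutualInfo_add_right hX hY hindep h1 h2,
    mutualInfo_sub_left hX hY hindep h1 h2, mutualInfo_sub_right hX hY hindep h1 h2]
  linarith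

/-- **Sum-difference inequality for mutual information.**
If `X, Y` are independent continuous random variables with all relevant differential
entropies existing and finite, then for every `α ∈ [0,1]`,
`α·I(X+Y;X) + (1-α)·I(X+Y;Y) ≤ (1+α)·I(X-Y;X) + (2-α)·I(X-Y;Y)`. -/
theorem sum_difference_mutualInfo
    {Ω : Type*} [MeasurableSpace Ω] (P : Measure Ω) [IsProbabilityMeasure P]
    (X Y : Ω → ℝ) (hX : Measurable X) (hY : Measurable Y)
    (hindep : IndepFun X Y P)
    (h1 : FiniteDent volume P X) (h2 : FiniteDent volume P Y)
    (h3 : FiniteDent volume P (X + Y)) (h4 : FiniteDent volume P (X - Y))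
    (h5 : FiniteDent volume P (fun ω => (X ω + Y ω, X ω)))
    (h6 : FiniteDent volume P (fun ω => (X ω + Y ω, Y ω)))
    (h7 : FiniteDent volume P (fun ω => (X ω - Y ω, X ω)))
    (h8 : FiniteDent volume P (fun ω => (X ω - Y ω, Y ω))) :
    ∀ α : ℝ, 0 ≤ α → α ≤ 1 →
      α * mutualInfo P (X + Y) X + (1 - α) * mutualInfo P (X + Y) Y ≤
        (1 + α) * mutualInfo P (X - Y) X + (2 - α) * mutualInfo P (X - Y) Y := fun α _ _ =>
  sum_difference_mutualInfo_general P X Y hX.aemeasurable hY.aemeasurable hindep h1 h2 h3 h4 α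
end

section
/- Balog-Szemerédi-Gowers lemma for differential entropy: Suppose X, Y are real-valued continuous random variables with all relevant differential entropies existing and finite, satisfying h(X,Y) ≥ h(X) + h(Y) - log K and h(X+Y) ≤ (1/2)h(X) + (1/2)h(Y) + log K for some K ≥ 1. Let X1, X2 be conditionally independent versions of X given Y, and let Y' be a conditionally independent version of Y given (X2, Y); that is, X2, Y, X1, Y' form a Markov chain in which the pairs (X2,Y), (X1,Y) and (X1,Y') each have the same joint distribution as (X,Y). Then: h(X2 | X1, Y) ≥ h(X) - log K; h(Y' | X1, Y) ≥ h(Y) - log K; and h(X2 + Y' | X1, Y) ≤ (1/2)h(X) + (1/2)h(Y) + 7 log K. -/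
open MeasureTheory ProbabilityTheory

/-- The conditional differential entropy `h(U|V) = h(U,V) - h(V)`. -/
noncomputable def condDent {Ω E F : Type*} [MeasurableSpace Ω] [MeasureSpace E] [MeasureSpace F]
    (P : Measure Ω) (U : Ω → E) (V : Ω → F) : ℝ :=
  dent volume P (fun ω => (U ω, V ω)) - dent volume P V

/-! Write `E = X₂ - X₁`, `S = X₁ + Y'` and `T = X₂ + Y' = S + E`. All inequalities are instances of
subadditivity and submodularity, that is, of Gibbs' inequality, read through volume-preserving
changes of variables:
* `h(X₂, X₁, Y) + h(E) ≤ h(X₁ + Y, X₂ + Y) + h(X₁, X₂)`, with `h(E, Y) ≤ h(E) + h(Y)`, bounds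
  `h(E, Y)` from above;
* `h(Y', X₁, X₂, Y) + h(T, Y) ≤ h(S, E, Y) + h(Y', X₂, Y)` and
  `h(T, X₁, Y) + h(Y) ≤ h(T, Y) + h(X₁, Y)` turn this into an upper bound on `h(T, X₁, Y)`.

The Markov property evaluates `h(X₂, X₁, Y) = 2 h(X, Y) - h(Y)` and
`h(Y', X₁, X₂, Y) = 3 h(X, Y) - h(X) - h(Y)`, which leaves
`h(T | X₁, Y) ≤ 3 h(X + Y) + 3 h(X) + 3 h(Y) - 4 h(X, Y)`; hence the constant `7 = 3 + 4`.

Entropies such as `h(E)` or `h(T, Y)` may a priori be infinite or undefined. The inequalities are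
therefore added as bounds on the upper mean of the pointwise surprisals, where these terms cancel,
and `h(T, X₁, Y)` is seen to be finite only at the end, by a submodularity bound from below. -/

open scoped ENNReal

/-- The surprisal of `A` at `ω`: minus the logarithm of the density of `A`, evaluated at the
sampled value `A ω`. Its mean is the differential entropy of `A`. -/
noncomputable def surprisal {Ω E : Type*} [MeasurableSpace Ω] [MeasureSpace E] (P : Measure Ω)
    (A : Ω → E) (ω : Ω) : ℝ :=
  -Real.log (pdf A P volume (A ω)).toReal

/-- The upper integral of `L` is at most `c`, witnessed by an integrable majorant. Unlike
`∫ ω, L ω ∂P ≤ c` this is meaningful when `L` is not integrable, so inequalities between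
entropies can be added up before the entropies involved are known to be finite. -/
def MeanLE {Ω : Type*} [MeasurableSpace Ω] (P : Measure Ω) (L : Ω → ℝ) (c : ℝ) : Prop :=
  ∃ g : Ω → ℝ, Integrable g P ∧ ∫ ω, g ω ∂P ≤ c ∧ L ≤ᵐ[P] g

/-- `A` has a density and its differential entropy is the finite number `c`. As with `HasSum`, the
value is bundled with the existence, which the bare number `dent volume P A` cannot express. -/
structure HasDent {Ω E : Type*} [MeasurableSpace Ω] [MeasureSpace E] (P : Measure Ω) (A : Ω → E)
    (c : ℝ) : Prop where
  hasPDF : HasPDF A P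
  integrable : Integrable (surprisal P A) P
  integral_eq : ∫ ω, surprisal P A ω ∂P = c

/-- `A` and `B` determine each other through a volume-preserving change of variables. -/
def VolumeEquiv {Ω E F : Type*} [MeasureSpace E] [MeasureSpace F] (A : Ω → E) (B : Ω → F) : Prop :=
  ∃ e : E ≃ᵐ F, MeasurePreserving e volume volume ∧ e ∘ A = B

/-- The density on `E × F × G` under which the first two coordinates are conditionally independent
given the third, with the same two marginals as `(A, C)` and `(B, C)`. It is the reference density
for submodularity, and the actual density of `(A, B, C)` in the conditionally independent case. -/
noncomputable def condProdPDF {Ω E F G : Type*} [MeasurableSpace Ω] [MeasureSpace E]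
    [MeasureSpace F] [MeasureSpace G] (P : Measure Ω) (A : Ω → E) (B : Ω → F) (C : Ω → G)
    (z : E × F × G) : ℝ≥0∞ :=
  pdf (fun ω => (A ω, C ω)) P volume (z.1, z.2.2) * pdf (fun ω => (B ω, C ω)) P volume z.2 /
    pdf C P volume z.2.2

local notation "⟪" A "," B "⟫" => fun ω => (A ω, B ω)
local notation "⟪" A "," B "," C "⟫" => fun ω => (A ω, B ω, C ω)
local notation "⟪" A "," B "," C "," D "⟫" => fun ω => (A ω, B ω, C ω, D ω)

namespace MeanLE

variable {Ω : Type*} [MeasurableSpace Ω] {P : Measure Ω} {L M : Ω → ℝ} {c d : ℝ}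

lemma of_integrable (hL : Integrable L P) (hc : ∫ ω, L ω ∂P ≤ c) : MeanLE P L c :=
  ⟨L, hL, hc, .rfl⟩

lemma mono (h : MeanLE P L c) (hML : M ≤ᵐ[P] L) (hcd : c ≤ d) : MeanLE P M d :=
  let ⟨g, hg, hgc, hLg⟩ := h
  ⟨g, hg, hgc.trans hcd, hML.trans hLg⟩

lemma add (hL : MeanLE P L c) (hM : MeanLE P M d) : MeanLE P (L + M) (c + d) := by
  obtain ⟨g, hg, hgc, hLg⟩ := hL
  obtain ⟨k, hk, hkd, hMk⟩ := hM
  exact ⟨g + k, hg.add hk, (integral_add hg hk).trans_le (add_le_add hgc hkd), hLg.add_le_add hMk⟩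

lemma integral_le (h : MeanLE P L c) (hL : Integrable L P) : ∫ ω, L ω ∂P ≤ c :=
  let ⟨_, hg, hgc, hLg⟩ := h
  (integral_mono_ae hL hg hLg).trans hgc

lemma integrable (hL : AEStronglyMeasurable L P) (hu : MeanLE P L c) (hl : MeanLE P (-L) d) :
    Integrable L P := by
  obtain ⟨g, hg, -, hLg⟩ := hu
  obtain ⟨k, hk, -, hLk⟩ := hl
  refine integrable_of_le_of_le hL ?_ hLg hk.neg hg
  filter_upwards [hLk] with ω hω using neg_le.1 hω

end MeanLE

section Surprisal

variable {Ω E : Type*} [MeasurableSpace Ω] [MeasureSpace E] {P : Measure Ω} {A : Ω → E}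

lemma measurable_log_pdf : Measurable fun x => Real.log (pdf A P volume x).toReal :=
  (measurable_pdf A P volume).ennreal_toReal.log

lemma aemeasurable_surprisal (hA : AEMeasurable A P) : AEMeasurable (surprisal P A) P :=
  measurable_log_pdf.neg.comp_aemeasurable hA

lemma integral_surprisal (hA : AEMeasurable A P) : ∫ ω, surprisal P A ω ∂P = dent volume P A :=
  (integral_map hA measurable_log_pdf.neg.aestronglyMeasurable).symm.trans (integral_neg _)

lemma finiteDent_iff (hA : AEMeasurable A P) :
    FiniteDent volume P A ↔ P.map A ≪ volume ∧ Integrable (surprisal P A) P := by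
  refine and_congr_right fun _ => ?_
  rw [← integrable_neg_iff]
  exact integrable_map_measure measurable_log_pdf.neg.aestronglyMeasurable hA

lemma FiniteDent.hasDent [SigmaFinite P] [SigmaFinite (volume : Measure E)]
    (hf : FiniteDent volume P A) (hA : AEMeasurable A P) : HasDent P A (dent volume P A) :=
  ⟨⟨hA, inferInstance, hf.1⟩, ((finiteDent_iff hA).1 hf).2, integral_surprisal hA⟩

end Surprisal

namespace HasDent

variable {Ω E : Type*} [MeasurableSpace Ω] [MeasureSpace E] {P : Measure Ω} {A B : Ω → E} {c d : ℝ}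

lemma aemeasurable (h : HasDent P A c) : AEMeasurable A P :=
  h.hasPDF.aemeasurable'

lemma dent_eq (h : HasDent P A c) : dent volume P A = c :=
  (integral_surprisal h.aemeasurable).symm.trans h.integral_eq

lemma condDent_eq {F : Type*} [MeasureSpace F] {V : Ω → F} (h : HasDent P ⟪A,V⟫ c)
    (hV : HasDent P V d) : condDent P A V = c - d :=
  congrArg₂ _ h.dent_eq hV.dent_eq

lemma finiteDent (h : HasDent P A c) : FiniteDent volume P A :=
  (finiteDent_iff h.aemeasurable).2 ⟨h.hasPDF.absolutelyContinuous', h.integrable⟩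

lemma meanLE_surprisal (h : HasDent P A c) : MeanLE P (surprisal P A) c :=
  .of_integrable h.integrable h.integral_eq.le

lemma meanLE_neg_surprisal (h : HasDent P A c) : MeanLE P (-surprisal P A) (-c) :=
  .of_integrable h.integrable.neg ((integral_neg _).trans (congrArg _ h.integral_eq)).le

lemma of_identDistrib [SigmaFinite P] [SigmaFinite (volume : Measure E)] (h : HasDent P B c)
    (hAB : IdentDistrib A B P P) : HasDent P A c := by
  have hf : FiniteDent volume P A := by
    rw [FiniteDent, hAB.map_eq]
    exact h.finiteDent
  have hdent : dent volume P A = c := by rw [← h.dent_eq, dent, dent, hAB.map_eq]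
  exact hdent ▸ hf.hasDent hAB.aemeasurable_fst

lemma exists_le_of_meanLE [HasPDF A P] (hu : MeanLE P (surprisal P A) c)
    (hl : MeanLE P (-surprisal P A) d) : ∃ k ≤ c, HasDent P A k := by
  have hint := hu.integrable
    (aemeasurable_surprisal (HasPDF.aemeasurable A P volume)).aestronglyMeasurable hl
  exact ⟨_, hu.integral_le hint, ‹_›, hint, rfl⟩

end HasDent

section Gibbs

variable {Ω E : Type*} [MeasurableSpace Ω] [MeasureSpace E] {P : Measure Ω} {A : Ω → E}

lemma ae_pdf_ne_zero_ne_top [IsFiniteMeasure P] [HasPDF A P] :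
    ∀ᵐ ω ∂P, pdf A P volume (A ω) ≠ 0 ∧ pdf A P volume (A ω) ≠ ∞ := by
  have hA := HasPDF.aemeasurable A P volume
  have hac : P.map A ≪ volume := HasPDF.absolutelyContinuous
  filter_upwards [ae_of_ae_map hA (Measure.rnDeriv_pos hac),
    ae_of_ae_map hA (hac.ae_le (Measure.rnDeriv_lt_top (P.map A) volume))] with ω hpos hfin
  exact ⟨hpos.ne', hfin.ne⟩

lemma lintegral_div_pdf_le_s16 [IsFiniteMeasure P] [HasPDF A P] {q : E → ℝ≥0∞} (hq : Measurable q) :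
    ∫⁻ ω, q (A ω) / pdf A P volume (A ω) ∂P ≤ ∫⁻ x, q x := by
  have hm : Measurable fun x => q x / pdf A P volume x := by fun_prop
  rw [← pdf.lintegral_pdf_mul (X := A) (μ := volume) hm.aemeasurable]
  exact lintegral_mono fun _ => ENNReal.mul_div_le

lemma meanLE_log_toReal [IsProbabilityMeasure P] {R : Ω → ℝ≥0∞} (hR : AEMeasurable R P)
    (hR_ne : ∀ᵐ ω ∂P, R ω ≠ 0) (hR_le : ∫⁻ ω, R ω ∂P ≤ 1) :
    MeanLE P (fun ω => Real.log (R ω).toReal) 0 := by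
  have hfin : ∫⁻ ω, R ω ∂P ≠ ∞ := (hR_le.trans_lt ENNReal.one_lt_top).ne
  have htop := ae_lt_top' hR hfin
  have hint : Integrable (fun ω => (R ω).toReal) P := integrable_toReal_of_lintegral_ne_top hR hfin
  refine ⟨fun ω => (R ω).toReal - 1, hint.sub (integrable_const 1), ?_, ?_⟩
  · rw [integral_sub hint (integrable_const 1), integral_toReal hR htop]
    simpa using ENNReal.toReal_mono ENNReal.one_ne_top hR_le
  · filter_upwards [hR_ne, htop] with ω h_ne h_top
    exact Real.log_le_sub_one_of_pos (ENNReal.toReal_pos h_ne h_top.ne)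

/-- Gibbs' inequality. -/
lemma meanLE_surprisal_add_log [IsProbabilityMeasure P] [HasPDF A P] {q : E → ℝ≥0∞}
    (hq : Measurable q) (hq_le : ∫⁻ x, q x ≤ 1)
    (hq_ne : ∀ᵐ ω ∂P, q (A ω) ≠ 0 ∧ q (A ω) ≠ ∞) :
    MeanLE P (fun ω => surprisal P A ω + Real.log (q (A ω)).toReal) 0 := by
  have hm := (hq.div (measurable_pdf A P)).comp_aemeasurable (HasPDF.aemeasurable A P volume)
  have hp_ne := ae_pdf_ne_zero_ne_top (P := P) (A := A)
  refine (meanLE_log_toReal hm ?_ ((lintegral_div_pdf_le_s16 hq).trans hq_le)).mono ?_ le_rfl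
  · filter_upwards [hq_ne, hp_ne] with ω hq hp using (ENNReal.div_pos hq.1 hp.2).ne'
  · filter_upwards [hq_ne, hp_ne] with ω hq hp
    have hq_pos := ENNReal.toReal_pos hq.1 hq.2
    have hp_pos := ENNReal.toReal_pos hp.1 hp.2
    simp only [surprisal, Function.comp_apply, Pi.div_apply, ENNReal.toReal_div,
      Real.log_div hq_pos.ne' hp_pos.ne', neg_add_eq_sub, le_refl]

end Gibbs

section Marginals

variable {Ω E F G : Type*} [MeasurableSpace Ω] [MeasureSpace E] [MeasureSpace F] [MeasureSpace G]
  {P : Measure Ω} [SFinite P] {A : Ω → E} {B : Ω → F} {C : Ω → G}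

lemma hasPDF_fst [SigmaFinite (volume : Measure E)] [SFinite (volume : Measure F)]
    [HasPDF ⟪A,B⟫ P] : HasPDF A P :=
  pdf.quasiMeasurePreserving_hasPDF' ⟪A,B⟫
    (Measure.quasiMeasurePreserving_fst (μ := volume) (ν := volume))

lemma hasPDF_snd [SFinite (volume : Measure E)] [SigmaFinite (volume : Measure F)]
    [HasPDF ⟪A,B⟫ P] : HasPDF B P :=
  pdf.quasiMeasurePreserving_hasPDF' ⟪A,B⟫
    (Measure.quasiMeasurePreserving_snd (μ := volume) (ν := volume))

lemma hasPDF_fst_thd [SigmaFinite (volume : Measure E)] [SFinite (volume : Measure F)]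
    [SigmaFinite (volume : Measure G)] [HasPDF ⟪A,B,C⟫ P] : HasPDF ⟪A,C⟫ P :=
  pdf.quasiMeasurePreserving_hasPDF' ⟪A,B,C⟫ (g := Prod.map id Prod.snd)
    (QuasiMeasurePreserving.prodMap (.id (volume : Measure E))
      (Measure.quasiMeasurePreserving_snd (μ := (volume : Measure F)) (ν := volume)))

end Marginals

section ConditionalMass

variable {Ω E G : Type*} [MeasurableSpace Ω] [MeasureSpace E] [MeasureSpace G]
  {P : Measure Ω} {A : Ω → E} {C : Ω → G}

lemma setLIntegral_map_eq_setLIntegral_mul_pdf [HasPDF C P] {f : G → ℝ≥0∞} (hf : Measurable f)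
    {u : Set G} (hu : MeasurableSet u) :
    ∫⁻ c in u, f c ∂P.map C = ∫⁻ c in u, f c * pdf C P volume c := by
  rw [map_eq_withDensity_pdf C P volume, setLIntegral_withDensity_eq_setLIntegral_mul _
    (measurable_pdf C P volume) hf hu]
  simp only [Pi.mul_apply, mul_comm]

variable [SFinite (volume : Measure E)] [SigmaFinite (volume : Measure G)]
  [HasPDF ⟪A,C⟫ P]

lemma setLIntegral_pdf_ae_eq_of_map_prod_apply {s : Set E} (hs : MeasurableSet s)
    {k : G → ℝ≥0∞} (hk : Measurable k)
    (h : ∀ u, MeasurableSet u → P.map ⟪A,C⟫ (s ×ˢ u) = ∫⁻ c in u, k c) :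
    (fun c => ∫⁻ a in s, pdf ⟪A,C⟫ P volume (a, c)) =ᵐ[volume] k := by
  have hmeas : Measurable (pdf ⟪A,C⟫ P volume) := measurable_pdf ⟪A,C⟫ P volume
  refine ae_eq_of_forall_setLIntegral_eq_of_sigmaFinite hmeas.lintegral_prod_left' hk
    fun u hu _ => ?_
  rw [← h u hu, map_eq_setLIntegral_pdf ⟪A,C⟫ P volume (hs.prod hu)]
  exact (setLIntegral_prod_symm _ hmeas.aemeasurable).symm

variable [IsFiniteMeasure P]

lemma lintegral_pdf_prod_ae_eq :
    (fun c => ∫⁻ a, pdf ⟪A,C⟫ P volume (a, c)) =ᵐ[volume] pdf C P := by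
  have := hasPDF_snd (P := P) (A := A) (B := C)
  have hAC := HasPDF.aemeasurable ⟪A,C⟫ P volume
  suffices h : (fun c => ∫⁻ a in .univ, pdf ⟪A,C⟫ P volume (a, c)) =ᵐ[volume] pdf C P by
    simpa only [setLIntegral_univ] using h
  refine setLIntegral_pdf_ae_eq_of_map_prod_apply .univ (measurable_pdf C P volume) fun u hu => ?_
  rw [← map_eq_setLIntegral_pdf C P volume hu, Measure.map_apply_of_aemeasurable hAC
    (.prod .univ hu), Measure.map_apply_of_aemeasurable hAC.snd hu, Set.univ_prod]
  rfl

lemma setLIntegral_pdf_prod_ae_eq_condDistrib_mul [StandardBorelSpace E] [Nonempty E]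
    {s : Set E} (hs : MeasurableSet s) :
    (fun c => ∫⁻ a in s, pdf ⟪A,C⟫ P volume (a, c)) =ᵐ[volume]
      fun c => condDistrib A C P c s * pdf C P volume c := by
  have := hasPDF_snd (P := P) (A := A) (B := C)
  have hAC := HasPDF.aemeasurable ⟪A,C⟫ P volume
  have hκ := Kernel.measurable_coe (condDistrib A C P) hs
  refine setLIntegral_pdf_ae_eq_of_map_prod_apply hs (hκ.mul (measurable_pdf C P volume))
    fun u hu => ?_
  calc P.map ⟪A,C⟫ (s ×ˢ u)
      = P.map ⟪C,A⟫ (u ×ˢ s) := by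
        rw [Measure.map_apply_of_aemeasurable hAC (hs.prod hu),
          Measure.map_apply_of_aemeasurable (hAC.snd.prodMk hAC.fst) (hu.prod hs)]
        simp only [Set.mk_preimage_prod, Set.inter_comm]
    _ = ∫⁻ c in u, condDistrib A C P c s ∂P.map C := by
        rw [← compProd_map_condDistrib hAC.fst, Measure.compProd_apply_prod hu hs]
    _ = ∫⁻ c in u, condDistrib A C P c s * pdf C P volume c :=
        setLIntegral_map_eq_setLIntegral_mul_pdf hκ hu

end ConditionalMass

section CondProdPDF

variable {Ω E F G : Type*} [MeasurableSpace Ω] [MeasureSpace E] [MeasureSpace F] [MeasureSpace G]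
  {P : Measure Ω} {A : Ω → E} {B : Ω → F} {C : Ω → G}

@[fun_prop]
lemma measurable_condProdPDF : Measurable (condProdPDF P A B C) := by
  unfold condProdPDF
  fun_prop

lemma ae_log_condProdPDF_eq [IsFiniteMeasure P] [HasPDF ⟪A,C⟫ P] [HasPDF ⟪B,C⟫ P] [HasPDF C P] :
    ∀ᵐ ω ∂P, Real.log (condProdPDF P A B C (A ω, B ω, C ω)).toReal =
      surprisal P C ω - surprisal P ⟪A,C⟫ ω - surprisal P ⟪B,C⟫ ω := by
  filter_upwards [ae_pdf_ne_zero_ne_top (P := P) (A := ⟪A,C⟫),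
    ae_pdf_ne_zero_ne_top (P := P) (A := ⟪B,C⟫), ae_pdf_ne_zero_ne_top (P := P) (A := C)]
    with ω hAC hBC hC
  have hAC_pos := ENNReal.toReal_pos hAC.1 hAC.2
  have hBC_pos := ENNReal.toReal_pos hBC.1 hBC.2
  have hC_pos := ENNReal.toReal_pos hC.1 hC.2
  rw [condProdPDF, ENNReal.toReal_div, ENNReal.toReal_mul,
    Real.log_div (by positivity) hC_pos.ne', Real.log_mul hAC_pos.ne' hBC_pos.ne']
  simp only [surprisal]
  ring

lemma ae_condProdPDF_ne_zero_ne_top [IsFiniteMeasure P] [HasPDF ⟪A,C⟫ P] [HasPDF ⟪B,C⟫ P]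
    [HasPDF C P] : ∀ᵐ ω ∂P, condProdPDF P A B C (A ω, B ω, C ω) ≠ 0 ∧
      condProdPDF P A B C (A ω, B ω, C ω) ≠ ∞ := by
  filter_upwards [ae_pdf_ne_zero_ne_top (P := P) (A := ⟪A,C⟫),
    ae_pdf_ne_zero_ne_top (P := P) (A := ⟪B,C⟫), ae_pdf_ne_zero_ne_top (P := P) (A := C)]
    with ω hAC hBC hC
  exact ⟨(ENNReal.div_pos (mul_ne_zero hAC.1 hBC.1) hC.2).ne',
    ENNReal.div_ne_top (ENNReal.mul_ne_top hAC.2 hBC.2) hC.1⟩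

variable [SFinite (volume : Measure E)] [SFinite (volume : Measure F)]

lemma setLIntegral_prod_mul_div [SFinite (volume : Measure G)] {f : E × G → ℝ≥0∞}
    {g : F × G → ℝ≥0∞} {k : G → ℝ≥0∞} (hf : Measurable f) (hg : Measurable g) (hk : Measurable k)
    (s : Set E) (t : Set F) (u : Set G) :
    ∫⁻ z in s ×ˢ t ×ˢ u, f (z.1, z.2.2) * g z.2 / k z.2.2 =
      ∫⁻ c in u, (∫⁻ a in s, f (a, c)) * (∫⁻ b in t, g (b, c)) / k c := by
  have : Measurable fun c => ∫⁻ a in s, f (a, c) := hf.lintegral_prod_left'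
  have integrate_fst (z : F × G) :
      ∫⁻ a in s, f (a, z.2) * g z / k z.2 = (∫⁻ a in s, f (a, z.2)) * (g z / k z.2) := by
    simp only [mul_div_assoc]
    exact lintegral_mul_const _ (by fun_prop)
  have integrate_snd (c : G) :
      ∫⁻ b in t, (∫⁻ a in s, f (a, c)) * (g (b, c) / k c) =
        (∫⁻ a in s, f (a, c)) * (∫⁻ b in t, g (b, c)) / k c := by
    simp only [div_eq_mul_inv, mul_assoc]
    rw [lintegral_const_mul _ (by fun_prop), lintegral_mul_const _ (by fun_prop)]
  rw [Measure.volume_eq_prod, setLIntegral_prod_symm _ (by fun_prop), Measure.volume_eq_prod]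
  simp only [integrate_fst]
  rw [setLIntegral_prod_symm _ (by fun_prop)]
  simp only [integrate_snd]

lemma setLIntegral_condProdPDF [SFinite (volume : Measure G)] (s : Set E) (t : Set F) (u : Set G) :
    ∫⁻ z in s ×ˢ t ×ˢ u, condProdPDF P A B C z =
      ∫⁻ c in u, (∫⁻ a in s, pdf ⟪A,C⟫ P volume (a, c)) *
        (∫⁻ b in t, pdf ⟪B,C⟫ P volume (b, c)) / pdf C P volume c :=
  setLIntegral_prod_mul_div (measurable_pdf ⟪A,C⟫ P volume) (measurable_pdf ⟪B,C⟫ P volume)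
    (measurable_pdf C P volume) s t u

lemma lintegral_condProdPDF_le [SigmaFinite (volume : Measure G)] [IsProbabilityMeasure P]
    [HasPDF ⟪A,C⟫ P] [HasPDF ⟪B,C⟫ P] :
    ∫⁻ z, condProdPDF P A B C z ≤ 1 := by
  have := hasPDF_snd (P := P) (A := A) (B := C)
  have h := setLIntegral_condProdPDF (P := P) (A := A) (B := B) (C := C) .univ .univ .univ
  simp only [Set.univ_prod_univ, setLIntegral_univ] at h
  rw [h, ← measure_univ (μ := P), ← pdf.lintegral_eq_measure_univ (X := C) (μ := volume)]
  refine lintegral_mono_ae ?_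
  filter_upwards [lintegral_pdf_prod_ae_eq (P := P) (A := A) (C := C),
    lintegral_pdf_prod_ae_eq (P := P) (A := B) (C := C)] with c hA hB
  rw [hA, hB]
  exact (mul_div_assoc _ _ _).trans_le ENNReal.mul_div_le

end CondProdPDF

section Inequalities

variable {Ω E F G : Type*} [MeasurableSpace Ω] [MeasureSpace E] [MeasureSpace F] [MeasureSpace G]
  [SigmaFinite (volume : Measure E)] [SigmaFinite (volume : Measure F)]
  {P : Measure Ω} [IsProbabilityMeasure P]

lemma surprisal_subadditive (A : Ω → E) (B : Ω → F) [HasPDF ⟪A,B⟫ P] :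
    MeanLE P (surprisal P ⟪A,B⟫ - surprisal P A - surprisal P B) 0 := by
  have := hasPDF_fst (P := P) (A := A) (B := B)
  have := hasPDF_snd (P := P) (A := A) (B := B)
  have hA := ae_pdf_ne_zero_ne_top (P := P) (A := A)
  have hB := ae_pdf_ne_zero_ne_top (P := P) (A := B)
  set q : E × F → ℝ≥0∞ := fun z => pdf A P volume z.1 * pdf B P volume z.2
  have hq : ∫⁻ z, q z ≤ 1 := by
    rw [Measure.volume_eq_prod, lintegral_prod_mul (by fun_prop) (by fun_prop),
      pdf.lintegral_eq_measure_univ, pdf.lintegral_eq_measure_univ, measure_univ, one_mul]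
  refine (meanLE_surprisal_add_log (A := ⟪A,B⟫) (q := q) (by fun_prop) hq ?_).mono ?_ le_rfl
  · filter_upwards [hA, hB] with ω hA hB
    exact ⟨mul_ne_zero hA.1 hB.1, ENNReal.mul_ne_top hA.2 hB.2⟩
  · filter_upwards [hA, hB] with ω hA hB
    simp only [q, ENNReal.toReal_mul, Real.log_mul (ENNReal.toReal_pos hA.1 hA.2).ne'
      (ENNReal.toReal_pos hB.1 hB.2).ne', Pi.sub_apply, surprisal]
    linarith

lemma surprisal_submodular [SigmaFinite (volume : Measure G)]
    (A : Ω → E) (B : Ω → F) (C : Ω → G) [HasPDF ⟪A,B,C⟫ P] :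
    MeanLE P (surprisal P ⟪A,B,C⟫ + surprisal P C - surprisal P ⟪A,C⟫ - surprisal P ⟪B,C⟫)
      0 := by
  have := hasPDF_fst_thd (P := P) (A := A) (B := B) (C := C)
  have := hasPDF_snd (P := P) (A := A) (B := ⟪B,C⟫)
  have := hasPDF_snd (P := P) (A := B) (B := C)
  refine (meanLE_surprisal_add_log (A := ⟪A,B,C⟫) measurable_condProdPDF
    (lintegral_condProdPDF_le (P := P) (A := A) (B := B) (C := C))
    ae_condProdPDF_ne_zero_ne_top).mono ?_ le_rfl
  filter_upwards [ae_log_condProdPDF_eq (P := P) (A := A) (B := B) (C := C)] with ω hω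
  simp only [hω, Pi.add_apply, Pi.sub_apply]
  linarith

end Inequalities

section CondIndep

variable {Ω E F G : Type*} [MeasurableSpace Ω] [StandardBorelSpace Ω]
  [MeasureSpace E] [StandardBorelSpace E] [Nonempty E]
  [MeasureSpace F] [StandardBorelSpace F] [Nonempty F]
  [MeasureSpace G] {P : Measure Ω} [IsFiniteMeasure P] {A : Ω → E} {B : Ω → F} {C : Ω → G}
  (hA : Measurable A) (hB : Measurable B) (hC : Measurable C)

include hA hB

lemma map_apply_prod_of_condIndepFun (h : A ⟂ᵢ[C, hC; P] B) {s : Set E} {t : Set F} {u : Set G}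
    (hs : MeasurableSet s) (ht : MeasurableSet t) (hu : MeasurableSet u) :
    P.map ⟪A,B,C⟫ (s ×ˢ t ×ˢ u) =
      ∫⁻ c in u, condDistrib A C P c s * condDistrib B C P c t ∂P.map C := by
  have hmap := (condIndepFun_iff_map_prod_eq_prod_condDistrib_prod_condDistrib hA hB hC).1 h
  calc P.map ⟪A,B,C⟫ (s ×ˢ t ×ˢ u)
      = P.map ⟪C,A,B⟫ (u ×ˢ s ×ˢ t) := by
        rw [Measure.map_apply (by fun_prop) (hs.prod (ht.prod hu)),
          Measure.map_apply (by fun_prop) (hu.prod (hs.prod ht))]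
        simp only [Set.mk_preimage_prod]
        rw [← Set.inter_assoc, Set.inter_comm]
    _ = ∫⁻ c in u, condDistrib A C P c s * condDistrib B C P c t ∂P.map C := by
        rw [hmap, ← Measure.compProd_eq_comp_prod, Measure.compProd_apply_prod hu (hs.prod ht)]
        simp only [Kernel.prod_apply_prod]

variable [SigmaFinite (volume : Measure E)] [SigmaFinite (volume : Measure F)]
  [SigmaFinite (volume : Measure G)]

lemma map_eq_withDensity_condProdPDF [HasPDF ⟪A,C⟫ P] [HasPDF ⟪B,C⟫ P]
    (h : A ⟂ᵢ[C, hC; P] B) :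
    P.map ⟪A,B,C⟫ = (volume : Measure (E × F × G)).withDensity (condProdPDF P A B C) := by
  have := hasPDF_snd (P := P) (A := A) (B := C)
  refine Measure.ext_prod₃ fun {s t u} hs ht hu => ?_
  have hκ : Measurable fun c => condDistrib A C P c s * condDistrib B C P c t :=
    (Kernel.measurable_coe _ hs).mul (Kernel.measurable_coe _ ht)
  rw [map_apply_prod_of_condIndepFun hA hB hC h hs ht hu,
    setLIntegral_map_eq_setLIntegral_mul_pdf hκ hu, withDensity_apply _ (hs.prod (ht.prod hu)),
    setLIntegral_condProdPDF]
  refine lintegral_congr_ae (ae_restrict_of_ae ?_)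
  filter_upwards [setLIntegral_pdf_prod_ae_eq_condDistrib_mul (P := P) (A := A) (C := C) hs,
    setLIntegral_pdf_prod_ae_eq_condDistrib_mul (P := P) (A := B) (C := C) ht,
    Measure.rnDeriv_lt_top (P.map C) volume] with c hAc hBc hfin
  rw [hAc, hBc]
  rcases eq_or_ne (pdf C P volume c) 0 with h0 | h0
  · simp [h0]
  · rw [← mul_assoc _ _ (pdf C P volume c), ENNReal.mul_div_cancel_right h0 hfin.ne]
    ring

lemma hasPDF_of_condIndepFun [HasPDF ⟪A,C⟫ P] [HasPDF ⟪B,C⟫ P] (h : A ⟂ᵢ[C, hC; P] B) :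
    HasPDF ⟪A,B,C⟫ P :=
  hasPDF_of_map_eq_withDensity (by fun_prop) (condProdPDF P A B C) (by fun_prop)
    (map_eq_withDensity_condProdPDF hA hB hC h)

lemma surprisal_ae_eq_of_condIndepFun [HasPDF ⟪A,C⟫ P] [HasPDF ⟪B,C⟫ P]
    (h : A ⟂ᵢ[C, hC; P] B) :
    surprisal P ⟪A,B,C⟫ =ᵐ[P] surprisal P ⟪A,C⟫ + surprisal P ⟪B,C⟫ - surprisal P C := by
  have := hasPDF_of_condIndepFun hA hB hC h
  have := hasPDF_snd (P := P) (A := A) (B := C)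
  have hac : P.map ⟪A,B,C⟫ ≪ volume := HasPDF.absolutelyContinuous
  have hpdf : pdf ⟪A,B,C⟫ P volume =ᵐ[volume] condProdPDF P A B C :=
    (pdf.eq_of_map_eq_withDensity' _ measurable_condProdPDF.aemeasurable).1
      (map_eq_withDensity_condProdPDF hA hB hC h)
  filter_upwards [ae_of_ae_map (by fun_prop) (hac.ae_le hpdf),
    ae_log_condProdPDF_eq (P := P) (A := A) (B := B) (C := C)] with ω hω hlog
  simp only [surprisal, Pi.add_apply, Pi.sub_apply] at hlog ⊢
  rw [hω, hlog]
  ring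

lemma hasDent_of_condIndepFun (h : A ⟂ᵢ[C, hC; P] B) {a b c : ℝ} (hAC : HasDent P ⟪A,C⟫ a)
    (hBC : HasDent P ⟪B,C⟫ b) (hcC : HasDent P C c) : HasDent P ⟪A,B,C⟫ (a + b - c) := by
  have := hAC.hasPDF
  have := hBC.hasPDF
  have hae := surprisal_ae_eq_of_condIndepFun hA hB hC h
  have hint := hAC.integrable.add hBC.integrable
  refine ⟨hasPDF_of_condIndepFun hA hB hC h, (hint.sub hcC.integrable).congr hae.symm, ?_⟩
  rw [integral_congr_ae hae, integral_sub' hint hcC.integrable,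
    integral_add' hAC.integrable hBC.integrable, hAC.integral_eq, hBC.integral_eq, hcC.integral_eq]

end CondIndep

namespace VolumeEquiv

section Surprisal

variable {Ω E F : Type*} [MeasurableSpace Ω] [MeasureSpace E] [MeasureSpace F]
  {P : Measure Ω} [IsFiniteMeasure P] {A : Ω → E} {B : Ω → F}

lemma hasPDF [SigmaFinite (volume : Measure F)] (h : VolumeEquiv A B) [HasPDF A P] :
    HasPDF B P := by
  obtain ⟨e, he, rfl⟩ := h
  exact pdf.quasiMeasurePreserving_hasPDF' A he.quasiMeasurePreserving

variable [SigmaFinite (volume : Measure E)]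

lemma surprisal_ae_eq (h : VolumeEquiv A B) [HasPDF A P] : surprisal P A =ᵐ[P] surprisal P B := by
  obtain ⟨e, he, rfl⟩ := h
  have hA := HasPDF.aemeasurable A P volume
  have hac : P.map A ≪ volume := HasPDF.absolutelyContinuous
  have hpdf : ∀ᵐ x, pdf (e ∘ A) P volume (e x) = pdf A P volume x := by
    have hrn := e.measurableEmbedding.rnDeriv_map (P.map A) volume
    rwa [he.map_eq, AEMeasurable.map_map_of_aemeasurable e.measurable.aemeasurable hA] at hrn
  filter_upwards [ae_of_ae_map hA (hac.ae_le hpdf)] with ω hω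
  simp only [surprisal, Function.comp_apply, hω]

lemma hasDent [SigmaFinite (volume : Measure F)] {c : ℝ} (h : VolumeEquiv A B)
    (hA : HasDent P A c) : HasDent P B c := by
  have := hA.hasPDF
  exact ⟨h.hasPDF, hA.integrable.congr h.surprisal_ae_eq,
    (integral_congr_ae h.surprisal_ae_eq).symm.trans hA.integral_eq⟩

end Surprisal

section Recoding

variable {Ω E F G : Type*} [MeasureSpace E] [MeasureSpace F] [MeasureSpace G]
  {A : Ω → E} {B : Ω → F} {C : Ω → G}

lemma symm (h : VolumeEquiv A B) : VolumeEquiv B A := by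
  obtain ⟨e, he, rfl⟩ := h
  exact ⟨e.symm, he.symm e, funext fun ω => e.symm_apply_apply (A ω)⟩

lemma trans (hAB : VolumeEquiv A B) (hBC : VolumeEquiv B C) : VolumeEquiv A C := by
  obtain ⟨e, he, rfl⟩ := hAB
  obtain ⟨e', he', rfl⟩ := hBC
  exact ⟨e.trans e', he'.comp he, rfl⟩

lemma prod_assoc [SFinite (volume : Measure F)] [SFinite (volume : Measure G)]
    (A : Ω → E) (B : Ω → F) (C : Ω → G) : VolumeEquiv ⟪⟪A,B⟫,C⟫ ⟪A,B,C⟫ :=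
  ⟨.prodAssoc, measurePreserving_prodAssoc volume volume volume, rfl⟩

variable [SFinite (volume : Measure E)] [SFinite (volume : Measure F)]

lemma prod_comm (A : Ω → E) (B : Ω → F) : VolumeEquiv ⟪A,B⟫ ⟪B,A⟫ :=
  ⟨.prodComm, Measure.measurePreserving_swap, rfl⟩

lemma prod_congr_right (A : Ω → E) (h : VolumeEquiv B C) : VolumeEquiv ⟪A,B⟫ ⟪A,C⟫ := by
  obtain ⟨e, he, rfl⟩ := h
  exact ⟨.prodCongr (.refl E) e, (MeasurePreserving.id volume).prod he, rfl⟩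

variable [SFinite (volume : Measure G)]

lemma prod_left_comm (A : Ω → E) (B : Ω → F) (C : Ω → G) : VolumeEquiv ⟪A,B,C⟫ ⟪B,A,C⟫ :=
  (prod_comm A ⟪B,C⟫).trans ((prod_assoc B C A).trans (prod_congr_right B (prod_comm C A)))

end Recoding

section Shear

variable {Ω E F G : Type*} [MeasureSpace E] [MeasureSpace F] [AddGroup G] [MeasureSpace G]
  [MeasurableAdd₂ G] [MeasurableNeg G] [SFinite (volume : Measure E)] [SFinite (volume : Measure F)]
  [SFinite (volume : Measure G)] [(volume : Measure G).IsAddRightInvariant]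
  {A A' : Ω → G} {B : Ω → E} {C : Ω → F}

lemma shear_right {g : E → G} (hg : Measurable g) (h : ∀ ω, A' ω = A ω + g (B ω)) :
    VolumeEquiv ⟪B,A⟫ ⟪B,A'⟫ := by
  let e : E × G ≃ᵐ E × G :=
    { toFun z := (z.1, z.2 + g z.1)
      invFun z := (z.1, z.2 - g z.1)
      left_inv z := by simp
      right_inv z := by simp
      measurable_toFun := show Measurable fun z : E × G => (z.1, z.2 + g z.1) by fun_prop
      measurable_invFun := show Measurable fun z : E × G => (z.1, z.2 - g z.1) by fun_prop }
  refine ⟨e, ?_, funext fun ω => Prod.ext rfl (h ω).symm⟩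
  exact (MeasurePreserving.id volume).skew_product (g := fun b a => a + g b) (by fun_prop)
    (.of_forall fun b => (measurePreserving_add_right volume (g b)).map_eq)

lemma shear_left {g : E → G} (hg : Measurable g) (h : ∀ ω, A' ω = A ω + g (B ω)) :
    VolumeEquiv ⟪A,B⟫ ⟪A',B⟫ :=
  (prod_comm A B).trans ((shear_right hg h).trans (prod_comm B A'))

lemma shear_middle {g : E × F → G} (hg : Measurable g) (h : ∀ ω, A' ω = A ω + g (B ω, C ω)) :
    VolumeEquiv ⟪B,A,C⟫ ⟪B,A',C⟫ :=
  (prod_left_comm B A C).trans ((shear_left hg h).trans (prod_left_comm A' B C))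

end Shear

end VolumeEquiv

lemma hasDent_of_markovChain {Ω E F G : Type*} [MeasurableSpace Ω] [StandardBorelSpace Ω]
    [MeasureSpace E] [StandardBorelSpace E] [Nonempty E] [SigmaFinite (volume : Measure E)]
    [MeasureSpace F] [SigmaFinite (volume : Measure F)]
    [MeasureSpace G] [StandardBorelSpace G] [Nonempty G] [SigmaFinite (volume : Measure G)]
    {P : Measure Ω} [IsFiniteMeasure P] {A : Ω → E} {B : Ω → F} {C : Ω → G} (hA : Measurable A)
    (hB : Measurable B) (hC : Measurable C) (h : A ⟂ᵢ[B, hB; P] C) {a b c : ℝ}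
    (hAB : HasDent P ⟪A,B⟫ a) (hBC : HasDent P ⟪B,C⟫ c) (hcB : HasDent P B b) :
    HasDent P ⟪A,B,C⟫ (a + c - b) :=
  (VolumeEquiv.prod_congr_right A (.prod_comm C B)).hasDent
    (hasDent_of_condIndepFun hA hC hB h hAB ((VolumeEquiv.prod_comm B C).hasDent hBC) hcB)

section Sumset

open VolumeEquiv

variable {Ω G : Type*} [AddCommGroup G] [MeasureSpace G] [MeasurableAdd₂ G] [MeasurableNeg G]
  [SigmaFinite (volume : Measure G)] [(volume : Measure G).IsAddRightInvariant] {X₁ X₂ Y Y' : Ω → G}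

lemma volumeEquiv_add_prod (X₁ X₂ Y Y' : Ω → G) :
    VolumeEquiv ⟪Y',X₁,X₂,Y⟫ ⟪X₂ + Y',X₂,X₁,Y⟫ :=
  (prod_congr_right Y' (prod_left_comm X₁ X₂ Y)).trans <|
    shear_left measurable_fst fun _ => add_comm _ _

variable [MeasurableSpace Ω] {P : Measure Ω}

lemma hasPDF_add_prod [IsFiniteMeasure P] [HasPDF ⟪Y',X₁,X₂,Y⟫ P] :
    HasPDF ⟪X₂ + Y',X₁,Y⟫ P := by
  have := (volumeEquiv_add_prod X₁ X₂ Y Y').hasPDF (P := P)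
  exact hasPDF_fst_thd (A := X₂ + Y') (B := X₂) (C := ⟪X₁,Y⟫)

variable [IsProbabilityMeasure P] {x₁ x₂ y y' s s₁ s₂ p₁ p₂ j q c : ℝ}

lemma meanLE_surprisal_sub_prod (hX₁ : HasDent P X₁ x₁) (hX₂ : HasDent P X₂ x₂)
    (hY : HasDent P Y y) (hS₁ : HasDent P (X₁ + Y) s₁) (hS₂ : HasDent P (X₂ + Y) s₂)
    (hJ : HasDent P ⟪X₂,X₁,Y⟫ j) :
    MeanLE P (surprisal P ⟪X₂ - X₁,Y⟫) (s₁ + s₂ + x₁ + x₂ + y - j) := by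
  have recode_diff : VolumeEquiv ⟪X₁,X₂⟫ ⟪X₁,X₂ - X₁⟫ :=
    shear_right measurable_neg fun _ => sub_eq_add_neg _ _
  have recode_sums : VolumeEquiv ⟪X₁ + Y,X₂ - X₁⟫ ⟪X₁ + Y,X₂ + Y⟫ :=
    shear_right measurable_id fun _ => by
      simp only [Pi.add_apply, Pi.sub_apply, id]
      abel
  have recode_joint : VolumeEquiv ⟪X₂,X₁,Y⟫ ⟪X₁ + Y,X₁,X₂ - X₁⟫ :=
    (prod_comm X₂ ⟪X₁,Y⟫).trans <| (prod_assoc X₁ Y X₂).trans <| (prod_left_comm X₁ Y X₂).trans <|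
      (prod_congr_right Y recode_diff).trans <| shear_left measurable_fst fun _ => add_comm _ _
  have recode_sub : VolumeEquiv ⟪X₂,X₁,Y⟫ ⟪X₂ - X₁,X₁,Y⟫ :=
    shear_left measurable_fst.neg fun _ => sub_eq_add_neg _ _
  have := (recode_joint.hasDent hJ).hasPDF
  have := (recode_sub.hasDent hJ).hasPDF
  have := hasPDF_fst_thd (P := P) (A := X₂ - X₁) (B := X₁) (C := Y)
  have := hasPDF_fst_thd (P := P) (A := X₁ + Y) (B := X₁) (C := X₂ - X₁)
  have := hasPDF_snd (P := P) (A := X₁ + Y) (B := ⟪X₁,X₂ - X₁⟫)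
  have := recode_sums.hasPDF (P := P)
  have := recode_diff.symm.hasPDF (P := P)
  have := hJ.hasPDF
  have gibbs := (((surprisal_submodular (P := P) (X₁ + Y) X₁ (X₂ - X₁)).add
    (surprisal_subadditive (X₂ - X₁) Y)).add (surprisal_subadditive (X₁ + Y) (X₂ + Y))).add
    (surprisal_subadditive X₁ X₂)
  have known := ((((hS₁.meanLE_surprisal.add hS₂.meanLE_surprisal).add hX₁.meanLE_surprisal).add
    hX₂.meanLE_surprisal).add hY.meanLE_surprisal).add hJ.meanLE_neg_surprisal
  refine (gibbs.add known).mono ?_ (by linarith)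
  filter_upwards [recode_joint.surprisal_ae_eq (P := P), recode_sums.surprisal_ae_eq (P := P),
    recode_diff.surprisal_ae_eq (P := P)] with ω h_joint h_sums h_diff
  simp only [Pi.add_apply, Pi.sub_apply, Pi.neg_apply] at h_joint h_sums h_diff ⊢
  linarith

lemma meanLE_surprisal_add_prod (hdiff : MeanLE P (surprisal P ⟪X₂ - X₁,Y⟫) c)
    (hS : HasDent P (X₁ + Y') s) (hY : HasDent P Y y) (hY' : HasDent P Y' y')
    (hX₁Y : HasDent P ⟪X₁,Y⟫ p₁) (hX₂Y : HasDent P ⟪X₂,Y⟫ p₂)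
    (hQ : HasDent P ⟪Y',X₁,X₂,Y⟫ q) :
    MeanLE P (surprisal P ⟪X₂ + Y',X₁,Y⟫) (s + y' + p₁ + p₂ - y - q + c) := by
  have recode_sum : VolumeEquiv ⟪Y',X₂,Y⟫ ⟪Y',X₂ + Y',Y⟫ := shear_middle measurable_fst fun _ => rfl
  have recode_all : VolumeEquiv ⟪Y',X₁,X₂,Y⟫ ⟪X₁ + Y',Y',X₂ + Y',Y⟫ :=
    (prod_left_comm Y' X₁ ⟪X₂,Y⟫).trans <| (shear_left measurable_fst fun _ => rfl).trans <|
      prod_congr_right (X₁ + Y') recode_sum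
  have recode_diff : VolumeEquiv ⟪X₁ + Y',X₂ + Y',Y⟫ ⟪X₁ + Y',X₂ - X₁,Y⟫ :=
    shear_middle measurable_fst.neg fun _ => by
      simp only [Pi.add_apply, Pi.sub_apply, Pi.neg_apply]
      abel
  have := hQ.hasPDF
  have := recode_all.hasPDF (P := P)
  have := hasPDF_add_prod (P := P) (X₁ := X₁) (X₂ := X₂) (Y := Y) (Y' := Y')
  have := hasPDF_fst_thd (P := P) (A := X₁ + Y') (B := Y') (C := ⟪X₂ + Y',Y⟫)
  have := recode_diff.hasPDF (P := P)
  have := hasPDF_snd (P := P) (A := X₁ + Y') (B := ⟪Y',X₂ + Y',Y⟫)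
  have := recode_sum.symm.hasPDF (P := P)
  have gibbs := (((surprisal_submodular (P := P) (X₁ + Y') Y' ⟪X₂ + Y',Y⟫).add
    (surprisal_subadditive (X₁ + Y') ⟪X₂ - X₁,Y⟫)).add (surprisal_subadditive Y' ⟪X₂,Y⟫)).add
    (surprisal_submodular (X₂ + Y') X₁ Y)
  have known := (((((hS.meanLE_surprisal.add hY'.meanLE_surprisal).add hX₁Y.meanLE_surprisal).add
    hX₂Y.meanLE_surprisal).add hY.meanLE_neg_surprisal).add hQ.meanLE_neg_surprisal).add hdiff
  refine (gibbs.add known).mono ?_ (by linarith)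
  filter_upwards [recode_all.surprisal_ae_eq (P := P), recode_sum.surprisal_ae_eq (P := P),
    recode_diff.surprisal_ae_eq (P := P)] with ω h_all h_sum h_diff
  simp only [Pi.add_apply, Pi.sub_apply, Pi.neg_apply] at h_all h_sum h_diff ⊢
  linarith

lemma meanLE_neg_surprisal_add_prod (hX₁Y : HasDent P ⟪X₁,Y⟫ p₁) (hJ : HasDent P ⟪X₂,X₁,Y⟫ j)
    (hQ : HasDent P ⟪Y',X₁,X₂,Y⟫ q) :
    MeanLE P (-surprisal P ⟪X₂ + Y',X₁,Y⟫) (j - p₁ - q) := by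
  have recode := volumeEquiv_add_prod X₁ X₂ Y Y'
  have := hQ.hasPDF
  have := recode.hasPDF (P := P)
  have known := (hJ.meanLE_surprisal.add hX₁Y.meanLE_neg_surprisal).add hQ.meanLE_neg_surprisal
  refine ((surprisal_submodular (P := P) (X₂ + Y') X₂ ⟪X₁,Y⟫).add known).mono ?_ (by linarith)
  filter_upwards [recode.surprisal_ae_eq (P := P)] with ω hω
  simp only [Pi.add_apply, Pi.sub_apply, Pi.neg_apply] at hω ⊢
  linarith

lemma exists_hasDent_add_prod_le (hX₁ : HasDent P X₁ x₁) (hX₂ : HasDent P X₂ x₂)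
    (hY : HasDent P Y y) (hY' : HasDent P Y' y') (hS₁ : HasDent P (X₁ + Y) s₁)
    (hS₂ : HasDent P (X₂ + Y) s₂) (hS : HasDent P (X₁ + Y') s) (hX₁Y : HasDent P ⟪X₁,Y⟫ p₁)
    (hX₂Y : HasDent P ⟪X₂,Y⟫ p₂) (hJ : HasDent P ⟪X₂,X₁,Y⟫ j)
    (hQ : HasDent P ⟪Y',X₁,X₂,Y⟫ q) :
    ∃ t ≤ s + s₁ + s₂ + x₁ + x₂ + y' + p₁ + p₂ - j - q, HasDent P ⟪X₂ + Y',X₁,Y⟫ t := by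
  have := hQ.hasPDF
  have := hasPDF_add_prod (P := P) (X₁ := X₁) (X₂ := X₂) (Y := Y) (Y' := Y')
  have hdiff := meanLE_surprisal_sub_prod hX₁ hX₂ hY hS₁ hS₂ hJ
  have hupper := meanLE_surprisal_add_prod hdiff hS hY hY' hX₁Y hX₂Y hQ
  obtain ⟨t, ht, hT⟩ :=
    HasDent.exists_le_of_meanLE hupper (meanLE_neg_surprisal_add_prod hX₁Y hJ hQ)
  exact ⟨t, by linarith, hT⟩

end Sumset

theorem balog_szemeredi_gowers_diffEntropy_general
    {Ω G : Type*} [MeasurableSpace Ω] [StandardBorelSpace Ω] [AddCommGroup G] [MeasureSpace G]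
    [StandardBorelSpace G] [MeasurableAdd₂ G] [MeasurableNeg G] [SigmaFinite (volume : Measure G)]
    [(volume : Measure G).IsAddRightInvariant] {P : Measure Ω} [IsProbabilityMeasure P]
    {X Y X₁ X₂ Y' : Ω → G} {κ : ℝ} (hY : Measurable Y) (hX₁ : Measurable X₁)
    (hX₂ : Measurable X₂) (hY' : Measurable Y')
    (hfX : FiniteDent volume P X) (hfY : FiniteDent volume P Y)
    (hfXY : FiniteDent volume P ⟪X,Y⟫) (hfsum : FiniteDent volume P (X + Y))
    (hdep : dent volume P X + dent volume P Y - κ ≤ dent volume P ⟪X,Y⟫)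
    (hsum : dent volume P (X + Y) ≤ (1 / 2) * dent volume P X + (1 / 2) * dent volume P Y + κ)
    (hid₂ : IdentDistrib ⟪X₂,Y⟫ ⟪X,Y⟫ P P) (hid₁ : IdentDistrib ⟪X₁,Y⟫ ⟪X,Y⟫ P P)
    (hid' : IdentDistrib ⟪X₁,Y'⟫ ⟪X,Y⟫ P P)
    (hmarkov₁ : X₁ ⟂ᵢ[Y, hY; P] X₂) (hmarkov₂ : Y' ⟂ᵢ[X₁, hX₁; P] ⟪X₂,Y⟫) :
    (FiniteDent volume P ⟪X₂,X₁,Y⟫ ∧ dent volume P X - κ ≤ condDent P X₂ ⟪X₁,Y⟫) ∧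
    (FiniteDent volume P ⟪Y',X₁,Y⟫ ∧ dent volume P Y - κ ≤ condDent P Y' ⟪X₁,Y⟫) ∧
    (FiniteDent volume P ⟪X₂ + Y',X₁,Y⟫ ∧ condDent P (X₂ + Y') ⟪X₁,Y⟫ ≤
      (1 / 2) * dent volume P X + (1 / 2) * dent volume P Y + 7 * κ) := by
  have eXY := hfXY.hasDent hid₁.aemeasurable_snd
  have eX := hfX.hasDent hid₁.aemeasurable_snd.fst
  have eY := hfY.hasDent hid₁.aemeasurable_snd.snd
  have eS := hfsum.hasDent (measurable_add.comp_aemeasurable hid₁.aemeasurable_snd)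
  have eX₁ : HasDent P X₁ (dent volume P X) := eX.of_identDistrib (hid₁.comp measurable_fst)
  have eX₁Y := eXY.of_identDistrib hid₁
  have eX₂Y := eXY.of_identDistrib hid₂
  have eY'X₁ := (VolumeEquiv.prod_comm X₁ Y').hasDent (eXY.of_identDistrib hid')
  have eX₂X₁Y := (VolumeEquiv.prod_congr_right X₂ (.prod_comm Y X₁)).hasDent <|
    hasDent_of_markovChain hX₂ hY hX₁ hmarkov₁.symm eX₂Y
      ((VolumeEquiv.prod_comm X₁ Y).hasDent eX₁Y) eY
  have eY'X₁Y := hasDent_of_markovChain hY' hX₁ hY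
    (hmarkov₂.comp measurable_id measurable_snd) eY'X₁ eX₁Y eX₁
  have eY'X₁X₂Y := hasDent_of_markovChain hY' hX₁ (hX₂.prodMk hY) hmarkov₂ eY'X₁
    ((VolumeEquiv.prod_left_comm X₂ X₁ Y).hasDent eX₂X₁Y) eX₁
  obtain ⟨t, ht, eT⟩ := exists_hasDent_add_prod_le (X₁ := X₁) (X₂ := X₂) (Y := Y) (Y' := Y') eX₁
    (eX.of_identDistrib (hid₂.comp measurable_fst)) eY
    (eY.of_identDistrib (hid'.comp measurable_snd)) (eS.of_identDistrib (hid₁.comp measurable_add))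
    (eS.of_identDistrib (hid₂.comp measurable_add)) (eS.of_identDistrib (hid'.comp measurable_add))
    eX₁Y eX₂Y eX₂X₁Y eY'X₁X₂Y
  refine ⟨⟨eX₂X₁Y.finiteDent, ?_⟩, ⟨eY'X₁Y.finiteDent, ?_⟩, eT.finiteDent, ?_⟩
  · linarith [eX₂X₁Y.condDent_eq eX₁Y]
  · linarith [eY'X₁Y.condDent_eq eX₁Y]
  · linarith [eT.condDent_eq eX₁Y]

/-- **Balog-Szemerédi-Gowers lemma for differential entropy.**
Suppose `X, Y` satisfy `h(X,Y) ≥ h(X) + h(Y) - log K` and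
`h(X+Y) ≤ ½h(X) + ½h(Y) + log K` for some `K ≥ 1`.  Let `X₁, X₂` be conditionally
independent versions of `X` given `Y`, and let `Y'` be a conditionally independent
version of `Y` given `(X₂, Y)`; that is, `X₂, Y, X₁, Y'` form a Markov chain in which
the pairs `(X₂,Y)`, `(X₁,Y)` and `(X₁,Y')` are each distributed as `(X,Y)`.  Then
`h(X₂ | X₁, Y) ≥ h(X) - log K`, `h(Y' | X₁, Y) ≥ h(Y) - log K`, and
`h(X₂ + Y' | X₁, Y) ≤ ½h(X) + ½h(Y) + 7·log K`. -/
theorem balog_szemeredi_gowers_diffEntropy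
    {Ω : Type*} [MeasurableSpace Ω] [StandardBorelSpace Ω]
    (P : Measure Ω) [IsProbabilityMeasure P]
    (X Y X₁ X₂ Y' : Ω → ℝ)
    (hX : Measurable X) (hY : Measurable Y) (hX₁ : Measurable X₁)
    (hX₂ : Measurable X₂) (hY' : Measurable Y')
    (K : ℝ) (hK : 1 ≤ K)
    (hfX : FiniteDent volume P X) (hfY : FiniteDent volume P Y)
    (hfXY : FiniteDent volume P (fun ω => (X ω, Y ω)))
    (hfsum : FiniteDent volume P (X + Y))
    (hfX₁Y : FiniteDent volume P (fun ω => (X₁ ω, Y ω)))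
    (hfj₁ : FiniteDent volume P (fun ω => (X₂ ω, (X₁ ω, Y ω))))
    (hfj₂ : FiniteDent volume P (fun ω => (Y' ω, (X₁ ω, Y ω))))
    (hfj₃ : FiniteDent volume P (fun ω => (X₂ ω + Y' ω, (X₁ ω, Y ω))))
    (hfdiff : FiniteDent volume P (fun ω => (X₁ ω - X₂ ω, Y ω)))
    (hdep : dent volume P (fun ω => (X ω, Y ω)) ≥
      dent volume P X + dent volume P Y - Real.log K)
    (hsum : dent volume P (X + Y) ≤
      (1 / 2) * dent volume P X + (1 / 2) * dent volume P Y + Real.log K)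
    (hid₂ : IdentDistrib (fun ω => (X₂ ω, Y ω)) (fun ω => (X ω, Y ω)) P P)
    (hid₁ : IdentDistrib (fun ω => (X₁ ω, Y ω)) (fun ω => (X ω, Y ω)) P P)
    (hid' : IdentDistrib (fun ω => (X₁ ω, Y' ω)) (fun ω => (X ω, Y ω)) P P)
    (hmarkov₁ : CondIndepFun (MeasurableSpace.comap Y inferInstance) hY.comap_le X₁ X₂ P)
    (hmarkov₂ : CondIndepFun (MeasurableSpace.comap X₁ inferInstance) hX₁.comap_le
      Y' (fun ω => (X₂ ω, Y ω)) P) :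
    condDent P X₂ (fun ω => (X₁ ω, Y ω)) ≥ dent volume P X - Real.log K ∧
    condDent P Y' (fun ω => (X₁ ω, Y ω)) ≥ dent volume P Y - Real.log K ∧
    condDent P (X₂ + Y') (fun ω => (X₁ ω, Y ω)) ≤
      (1 / 2) * dent volume P X + (1 / 2) * dent volume P Y + 7 * Real.log K := by
  obtain ⟨⟨-, h₂⟩, ⟨-, h'⟩, -, hT⟩ := balog_szemeredi_gowers_diffEntropy_general hY hX₁ hX₂ hY'
    hfX hfY hfXY hfsum hdep hsum hid₂ hid₁ hid' hmarkov₁ hmarkov₂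
  exact ⟨h₂, h', hT⟩
end
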